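/- arXiv:1708.00505 — 2 statements merged into one kernel-verified Lean document; each statement's English description precedes it below -/
import Mathlib

section
/- Let b > 0, let q : ℝ → ℂ be continuous on [−b,b], let f solve f'' − q f = 0 on [−b,b] with f(0) = 1, f'(0) = 0, and assume f(x) ≠ 0 on [−b,b]. For ω ∈ ℝ let u(ω,·) be the solution of y'' − q(x)y = −ω² y on [−b,b] with y(0) = 1, y'(0) = iω. Then for every ω ∈ ℝ and every x ∈ [−b,b], the series Σ_{n=0}^{∞} c_n(x)(iω)ⁿ converges and u(ω,x) = e^{iωx} + √π · e^{−ω²/4} · Σ_{n=0}^{∞} c_n(x)(iω)ⁿ, where c_n(x) = (1/(√π n! 2ⁿ)) Σ_{k=0}^{n} h_{k,n} (φ_k(x) − x^k). -/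
open MeasureTheory Set Filter Finset Complex Topology

noncomputable section

/-- The iterated integrals X⁽ⁿ⁾: X⁽⁰⁾ ≡ 1, X⁽ⁿ⁾(x) = n ∫₀ˣ X⁽ⁿ⁻¹⁾(s) (f(s)²)^((−1)ⁿ) ds. -/
def formalX (f : ℝ → ℂ) : ℕ → ℝ → ℂ
  | 0 => fun _ => 1
  | n + 1 => fun x =>
      (n + 1 : ℂ) * ∫ s in (0:ℝ)..x, formalX f n s * ((f s) ^ 2) ^ ((-1 : ℤ) ^ (n + 1))

/-- The iterated integrals X̃⁽ⁿ⁾: X̃⁽⁰⁾ ≡ 1, X̃⁽ⁿ⁾(x) = n ∫₀ˣ X̃⁽ⁿ⁻¹⁾(s) (f(s)²)^((−1)^(n−1)) ds. -/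
def formalXt (f : ℝ → ℂ) : ℕ → ℝ → ℂ
  | 0 => fun _ => 1
  | n + 1 => fun x =>
      (n + 1 : ℂ) * ∫ s in (0:ℝ)..x, formalXt f n s * ((f s) ^ 2) ^ ((-1 : ℤ) ^ n)

/-- The formal powers φₖ: φₖ = f·X⁽ᵏ⁾ for odd k, φₖ = f·X̃⁽ᵏ⁾ for even k. -/
def formalPower (f : ℝ → ℂ) (k : ℕ) (x : ℝ) : ℂ :=
  if Odd k then f x * formalX f k x else f x * formalXt f k x

/-- The physicists' Hermite polynomials: H₀ = 1, Hₙ₊₁ = 2x·Hₙ − Hₙ'. -/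
def hermitePhys : ℕ → Polynomial ℝ
  | 0 => 1
  | n + 1 => 2 * Polynomial.X * hermitePhys n - Polynomial.derivative (hermitePhys n)

/-- cₙ(x) = (1/(√π n! 2ⁿ)) Σₖ h_{k,n} (φₖ(x) − xᵏ), h_{k,n} the coefficient of yᵏ in Hₙ. -/
def cCoef (f : ℝ → ℂ) (n : ℕ) (x : ℝ) : ℂ :=
  (1 / ((Real.sqrt Real.pi : ℂ) * n.factorial * 2 ^ n)) *
    ∑ k ∈ Finset.range (n + 1), ((hermitePhys n).coeff k : ℂ) * (formalPower f k x - (x : ℂ) ^ k)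

lemma hasSum_of_eq {F G : ℕ → ℂ} {a : ℂ} (h : ∀ n, F n = G n) (hG : HasSum G a) :
    HasSum F a := by
  rw [funext h]; exact hG

lemma int_deriv {b : ℝ} (hb : 0 < b) {g : ℝ → ℂ} (hg : ContinuousOn g (Set.Icc (-b) b)) :
    ∀ x ∈ Set.Icc (-b) b,
      HasDerivWithinAt (fun x => ∫ s in (0:ℝ)..x, g s) (g x) (Set.Icc (-b) b) x := by
  intro x hx
  have hle : -b ≤ b := by linarith
  have h0 : (0:ℝ) ∈ Set.Icc (-b) b := ⟨by linarith, by linarith⟩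
  have hc : Continuous (Set.IccExtend hle (Set.domRestrict (Set.Icc (-b) b) g)) :=
    (continuousOn_iff_continuous_domRestrict.1 hg).Icc_extend'
  have heq : ∀ z ∈ Set.Icc (-b) b,
      Set.IccExtend hle (Set.domRestrict (Set.Icc (-b) b) g) z = g z := by
    intro z hz
    rw [Set.IccExtend_of_mem hle _ hz]; rfl
  have hd := (intervalIntegral.integral_hasDerivAt_right (hc.intervalIntegrable 0 x)
    (hc.stronglyMeasurableAtFilter _ _) hc.continuousAt).hasDerivWithinAt (s := Set.Icc (-b) b)
  rw [heq x hx] at hd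
  refine hd.congr_of_mem ?_ hx
  intro z hz
  refine intervalIntegral.integral_congr ?_
  intro s hs
  exact (heq s (Set.uIcc_subset_Icc h0 hz hs)).symm

lemma step_pos {c b : ℝ} {N : ℕ} {F G : ℝ → ℂ}
    (hF : ∀ x ∈ Set.Icc 0 b, HasDerivWithinAt F (G x) (Set.Icc 0 b) x) (h0 : F 0 = 0)
    (hG : ∀ x ∈ Set.Icc 0 b, ‖G x‖ ≤ c * |x| ^ N) :
    ∀ x ∈ Set.Icc 0 b, ‖F x‖ ≤ c / (N + 1) * |x| ^ (N + 1) := by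
  intro x hx
  have hN : (N + 1 : ℝ) ≠ 0 := by positivity
  have key := image_norm_le_of_norm_deriv_right_le_deriv_boundary (a := 0) (b := b)
    (f := F) (f' := G) (B := fun x => c / (N + 1) * x ^ (N + 1)) (B' := fun x => c * x ^ N)
    (fun x hx => (hF x hx).continuousWithinAt)
    (fun x hx => (hF x ⟨hx.1, hx.2.le⟩).mono_of_mem_nhdsWithin
      (Icc_mem_nhdsGE_of_mem hx))
    (by simp [h0])
    (fun x => by
      have := (hasDerivAt_pow (N + 1) x).const_mul (c / (N + 1))
      refine this.congr_deriv ?_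
      rw [Nat.add_sub_cancel]
      push_cast
      field_simp)
    (fun x hx => by
      have := hG x ⟨hx.1, hx.2.le⟩
      rwa [abs_of_nonneg hx.1] at this)
  have := key hx
  rwa [abs_of_nonneg hx.1]

lemma step_bound {c b : ℝ} {N : ℕ} {F G : ℝ → ℂ}
    (hF : ∀ x ∈ Set.Icc (-b) b, HasDerivWithinAt F (G x) (Set.Icc (-b) b) x) (h0 : F 0 = 0)
    (hG : ∀ x ∈ Set.Icc (-b) b, ‖G x‖ ≤ c * |x| ^ N) :
    ∀ x ∈ Set.Icc (-b) b, ‖F x‖ ≤ c / (N + 1) * |x| ^ (N + 1) := by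
  intro x hx
  rcases le_total 0 x with h | h
  · have hs : Set.Icc 0 b ⊆ Set.Icc (-b) b := fun z hz =>
      ⟨by linarith [hz.1, hz.2], hz.2⟩
    exact step_pos (fun z hz => (hF z (hs hz)).mono hs) h0 (fun z hz => hG z (hs hz)) x ⟨h, hx.2⟩
  · have hs : ∀ z ∈ Set.Icc 0 b, -z ∈ Set.Icc (-b) b := fun z hz =>
      ⟨by linarith [hz.1, hz.2], by linarith [hz.1, hz.2]⟩
    have := step_pos (c := c) (N := N) (b := b) (F := fun z => F (-z)) (G := fun z => -G (-z))
      (fun z hz => by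
        have h1 := HasDerivWithinAt.scomp z (hF (-z) (hs z hz))
          ((hasDerivAt_neg z).hasDerivWithinAt (s := Set.Icc 0 b)) hs
        simpa [Function.comp_def] using h1)
      (by simp [h0]) (fun z hz => by simpa using hG (-z) (hs z hz)) (-x)
      ⟨by linarith, by linarith [hx.1]⟩
    simpa using this

/-- the generic iterated-integral family, with parity offset. -/
def fam (f : ℝ → ℂ) (e : ℕ) (k : ℕ) : ℝ → ℂ :=
  if Even (k + e) then formalXt f k else formalX f k

lemma zpow_cont {b : ℝ} {f : ℝ → ℂ} (hf : ContinuousOn f (Set.Icc (-b) b))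
    (hfne : ∀ x ∈ Set.Icc (-b) b, f x ≠ 0) (m : ℤ) :
    ContinuousOn (fun s => (f s ^ 2) ^ m) (Set.Icc (-b) b) :=
  (hf.pow 2).zpow₀ m (fun x hx => Or.inl (pow_ne_zero 2 (hfne x hx)))

lemma X_cont {b : ℝ} (hb : 0 < b) {f : ℝ → ℂ} (hf : ContinuousOn f (Set.Icc (-b) b))
    (hfne : ∀ x ∈ Set.Icc (-b) b, f x ≠ 0) (n : ℕ) :
    ContinuousOn (formalX f n) (Set.Icc (-b) b) := by
  induction n with
  | zero => exact continuousOn_const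
  | succ n ih =>
    have := int_deriv hb (ih.mul (zpow_cont hf hfne ((-1 : ℤ) ^ (n + 1))))
    exact continuousOn_const.mul (fun x hx => (this x hx).continuousWithinAt)

lemma Xt_cont {b : ℝ} (hb : 0 < b) {f : ℝ → ℂ} (hf : ContinuousOn f (Set.Icc (-b) b))
    (hfne : ∀ x ∈ Set.Icc (-b) b, f x ≠ 0) (n : ℕ) :
    ContinuousOn (formalXt f n) (Set.Icc (-b) b) := by
  induction n with
  | zero => exact continuousOn_const
  | succ n ih =>
    have := int_deriv hb (ih.mul (zpow_cont hf hfne ((-1 : ℤ) ^ n)))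
    exact continuousOn_const.mul (fun x hx => (this x hx).continuousWithinAt)

lemma P_deriv {b : ℝ} (hb : 0 < b) {f : ℝ → ℂ} (hf : ContinuousOn f (Set.Icc (-b) b))
    (hfne : ∀ x ∈ Set.Icc (-b) b, f x ≠ 0) (n : ℕ) : ∀ x ∈ Set.Icc (-b) b,
    HasDerivWithinAt (fam f 0 (n + 1)) ((n + 1 : ℂ) * (fam f 1 n x * (f x ^ 2)⁻¹))
      (Set.Icc (-b) b) x := by
  intro x hx
  have h1 := (int_deriv hb ((X_cont hb hf hfne n).mul
    (zpow_cont hf hfne ((-1 : ℤ) ^ (n + 1)))) x hx).const_mul (n + 1 : ℂ)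
  have h2 := (int_deriv hb ((Xt_cont hb hf hfne n).mul
    (zpow_cont hf hfne ((-1 : ℤ) ^ n))) x hx).const_mul (n + 1 : ℂ)
  unfold fam
  by_cases h : Even (n + 1)
  · have h' : Odd n := by grind
    rw [h'.neg_one_pow] at h2
    simp only [add_zero, h, if_true]
    simpa [formalXt, h'.neg_one_pow] using h2
  · have h' : Even n := by grind
    rw [h'.add_one.neg_one_pow] at h1
    simp only [add_zero, h, if_false]
    simpa [formalX, h'.add_one.neg_one_pow] using h1

lemma Q_deriv {b : ℝ} (hb : 0 < b) {f : ℝ → ℂ} (hf : ContinuousOn f (Set.Icc (-b) b))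
    (hfne : ∀ x ∈ Set.Icc (-b) b, f x ≠ 0) (n : ℕ) : ∀ x ∈ Set.Icc (-b) b,
    HasDerivWithinAt (fam f 1 (n + 1)) ((n + 1 : ℂ) * (fam f 0 n x * f x ^ 2))
      (Set.Icc (-b) b) x := by
  intro x hx
  have h1 := (int_deriv hb ((X_cont hb hf hfne n).mul
    (zpow_cont hf hfne ((-1 : ℤ) ^ (n + 1)))) x hx).const_mul (n + 1 : ℂ)
  have h2 := (int_deriv hb ((Xt_cont hb hf hfne n).mul
    (zpow_cont hf hfne ((-1 : ℤ) ^ n))) x hx).const_mul (n + 1 : ℂ)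
  unfold fam
  by_cases h : Even n
  · have h' : Even (n + 1 + 1) := by grind
    rw [h.neg_one_pow] at h2
    simp only [add_zero, h, h', if_true]
    simpa [formalXt, h.neg_one_pow] using h2
  · have h' : ¬ Even (n + 1 + 1) := by grind
    have h'' : Even (n + 1) := by grind
    rw [h''.neg_one_pow] at h1
    simp only [add_zero, h, h', if_false]
    simpa [formalX, h''.neg_one_pow] using h1

lemma fam_zero (f : ℝ → ℂ) (e : ℕ) (x : ℝ) : fam f e 0 x = 1 := by
  unfold fam; split_ifs <;> rfl

lemma fam_succ_zero (f : ℝ → ℂ) (e n : ℕ) : fam f e (n + 1) 0 = 0 := by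
  unfold fam; split_ifs <;> simp [formalX, formalXt]

lemma fam_bound {b M : ℝ} (hb : 0 < b) {f : ℝ → ℂ} (hf : ContinuousOn f (Set.Icc (-b) b))
    (hfne : ∀ x ∈ Set.Icc (-b) b, f x ≠ 0)
    (hM1 : ∀ x ∈ Set.Icc (-b) b, ‖f x ^ 2‖ ≤ M)
    (hM2 : ∀ x ∈ Set.Icc (-b) b, ‖(f x ^ 2)⁻¹‖ ≤ M) (n : ℕ) :
    (∀ x ∈ Set.Icc (-b) b, ‖fam f 0 n x‖ ≤ M ^ n * |x| ^ n) ∧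
    (∀ x ∈ Set.Icc (-b) b, ‖fam f 1 n x‖ ≤ M ^ n * |x| ^ n) := by
  induction n with
  | zero => simp [fam_zero]
  | succ n ih =>
    have hM : 0 ≤ M := (norm_nonneg _).trans (hM1 0 ⟨by linarith, by linarith⟩)
    have hn : (0:ℝ) < n + 1 := by positivity
    have hc : ‖(n + 1 : ℂ)‖ = n + 1 := by
      have := Complex.norm_natCast (n + 1); push_cast at this; exact this
    have he : (n + 1) * M ^ (n + 1) / ((n:ℝ) + 1) = M ^ (n + 1) := by field_simp
    constructor
    · have := step_bound (c := (n + 1) * M ^ (n + 1)) (N := n) (P_deriv hb hf hfne n)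
        (fam_succ_zero f 0 n) (fun x hx => by
          rw [norm_mul, norm_mul, hc]
          have := mul_le_mul (ih.2 x hx) (hM2 x hx) (norm_nonneg _) (by positivity)
          calc _ ≤ (n + 1 : ℝ) * (M ^ n * |x| ^ n * M) := by gcongr
            _ = _ := by ring)
      rwa [he] at this
    · have := step_bound (c := (n + 1) * M ^ (n + 1)) (N := n) (Q_deriv hb hf hfne n)
        (fam_succ_zero f 1 n) (fun x hx => by
          rw [norm_mul, norm_mul, hc]
          have := mul_le_mul (ih.1 x hx) (hM1 x hx) (norm_nonneg _) (by positivity)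
          calc _ ≤ (n + 1 : ℝ) * (M ^ n * |x| ^ n * M) := by gcongr
            _ = _ := by ring)
      rwa [he] at this

/-- partial sums of the spectral parameter power series -/
def pS (f : ℝ → ℂ) (e : ℕ) (l : ℂ) (N : ℕ) (x : ℝ) : ℂ :=
  ∑ k ∈ Finset.range N, l ^ k / (k.factorial : ℂ) * fam f e k x

lemma pS_deriv_P {b : ℝ} (hb : 0 < b) {f : ℝ → ℂ} (hf : ContinuousOn f (Set.Icc (-b) b))
    (hfne : ∀ x ∈ Set.Icc (-b) b, f x ≠ 0) (l : ℂ) (N : ℕ) : ∀ x ∈ Set.Icc (-b) b,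
    HasDerivWithinAt (pS f 0 l (N + 1)) (l * pS f 1 l N x * (f x ^ 2)⁻¹)
      (Set.Icc (-b) b) x := by
  intro x hx
  have h1 := HasDerivWithinAt.fun_sum (u := Finset.range N) (fun k _ =>
    (P_deriv hb hf hfne k x hx).const_mul (l ^ (k + 1) / ((k + 1).factorial : ℂ)))
  have h2 := h1.add_const (1 : ℂ)
  refine (h2.congr_deriv ?_).congr_of_mem ?_ hx
  rotate_left
  · intro z _
    simp [pS, Finset.sum_range_succ', fam_zero]
  · symm
    rw [pS, Finset.mul_sum, Finset.sum_mul]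
    refine Finset.sum_congr rfl fun k _ => ?_
    have : (k + 1 : ℂ) ≠ 0 := by exact_mod_cast Nat.succ_ne_zero k
    have : (k.factorial : ℂ) ≠ 0 := by exact_mod_cast k.factorial_ne_zero
    rw [Nat.factorial_succ]; push_cast; field_simp; ring

lemma pS_deriv_Q {b : ℝ} (hb : 0 < b) {f : ℝ → ℂ} (hf : ContinuousOn f (Set.Icc (-b) b))
    (hfne : ∀ x ∈ Set.Icc (-b) b, f x ≠ 0) (l : ℂ) (N : ℕ) : ∀ x ∈ Set.Icc (-b) b,
    HasDerivWithinAt (pS f 1 l (N + 1)) (l * pS f 0 l N x * (f x ^ 2))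
      (Set.Icc (-b) b) x := by
  intro x hx
  have h1 := HasDerivWithinAt.fun_sum (u := Finset.range N) (fun k _ =>
    (Q_deriv hb hf hfne k x hx).const_mul (l ^ (k + 1) / ((k + 1).factorial : ℂ)))
  have h2 := h1.add_const (1 : ℂ)
  refine (h2.congr_deriv ?_).congr_of_mem ?_ hx
  rotate_left
  · intro z _
    simp [pS, Finset.sum_range_succ', fam_zero]
  · symm
    rw [pS, Finset.mul_sum, Finset.sum_mul]
    refine Finset.sum_congr rfl fun k _ => ?_
    have : (k + 1 : ℂ) ≠ 0 := by exact_mod_cast Nat.succ_ne_zero k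
    have : (k.factorial : ℂ) ≠ 0 := by exact_mod_cast k.factorial_ne_zero
    rw [Nat.factorial_succ]; push_cast; field_simp; ring

lemma pS_zero (f : ℝ → ℂ) (e : ℕ) (l : ℂ) (N : ℕ) : pS f e l (N + 1) 0 = 1 := by
  simp [pS, Finset.sum_range_succ', fam_zero, fam_succ_zero]

lemma remainder {b M : ℝ} (hb : 0 < b) {f : ℝ → ℂ} (hf : ContinuousOn f (Set.Icc (-b) b))
    (hfne : ∀ x ∈ Set.Icc (-b) b, f x ≠ 0)
    (hM1 : ∀ x ∈ Set.Icc (-b) b, ‖f x ^ 2‖ ≤ M)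
    (hM2 : ∀ x ∈ Set.Icc (-b) b, ‖(f x ^ 2)⁻¹‖ ≤ M) (l : ℂ) (v w : ℝ → ℂ)
    (hv : ∀ x ∈ Set.Icc (-b) b,
      HasDerivWithinAt v (w x * (f x ^ 2)⁻¹) (Set.Icc (-b) b) x)
    (hw : ∀ x ∈ Set.Icc (-b) b,
      HasDerivWithinAt w (l ^ 2 * (v x * f x ^ 2)) (Set.Icc (-b) b) x)
    (hv0 : v 0 = 1) (hw0 : w 0 = l) (K : ℝ) (hK1 : ∀ x ∈ Set.Icc (-b) b, ‖v x‖ ≤ K)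
    (hK2 : ∀ x ∈ Set.Icc (-b) b, ‖w x‖ ≤ K) (N : ℕ) :
    (∀ x ∈ Set.Icc (-b) b, ‖v x - pS f 0 l N x‖ ≤
      K * (M * (1 + ‖l‖ ^ 2)) ^ N / N.factorial * |x| ^ N) ∧
    (∀ x ∈ Set.Icc (-b) b, ‖w x - l * pS f 1 l N x‖ ≤
      K * (M * (1 + ‖l‖ ^ 2)) ^ N / N.factorial * |x| ^ N) := by
  have hz : (0:ℝ) ∈ Set.Icc (-b) b := ⟨by linarith, by linarith⟩
  have hM : 0 ≤ M := (norm_nonneg _).trans (hM1 0 hz)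
  have hK : 0 ≤ K := (norm_nonneg _).trans (hK1 0 hz)
  induction N with
  | zero => simpa [pS] using ⟨fun x h1 h2 => hK1 x ⟨h1, h2⟩, fun x h1 h2 => hK2 x ⟨h1, h2⟩⟩
  | succ N ih =>
    set L := M * (1 + ‖l‖ ^ 2) with hL
    have hL0 : 0 ≤ L := by positivity
    have hML : M ≤ L := by nlinarith [sq_nonneg ‖l‖, mul_nonneg hM (sq_nonneg ‖l‖)]
    have hML' : ‖l‖ ^ 2 * M ≤ L := by nlinarith [sq_nonneg ‖l‖, mul_nonneg hM (sq_nonneg ‖l‖)]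
    have he : K * L ^ N / N.factorial * L / ((N:ℝ) + 1) = K * L ^ (N + 1) / (N + 1).factorial := by
      have : (N.factorial : ℝ) ≠ 0 := by exact_mod_cast N.factorial_ne_zero
      rw [Nat.factorial_succ, pow_succ]; push_cast; field_simp
    constructor
    · have := step_bound (c := K * L ^ N / N.factorial * L) (N := N)
        (fun x hx => (hv x hx).sub (pS_deriv_P hb hf hfne l N x hx))
        (by simp [hv0, pS_zero]) (fun x hx => by
          rw [← sub_mul, norm_mul]
          have := mul_le_mul (ih.2 x hx) ((hM2 x hx).trans hML) (norm_nonneg _) (by positivity)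
          refine this.trans (le_of_eq (by ring)))
      rwa [he] at this
    · have := step_bound (c := K * L ^ N / N.factorial * L) (N := N)
        (fun x hx => (hw x hx).sub ((pS_deriv_Q hb hf hfne l N x hx).const_mul l))
        (by simp [hw0, pS_zero]) (fun x hx => by
          have e : l ^ 2 * (v x * f x ^ 2) - l * (l * pS f 0 l N x * f x ^ 2)
            = (v x - pS f 0 l N x) * (l ^ 2 * f x ^ 2) := by ring
          have h3 : ‖l ^ 2 * f x ^ 2‖ ≤ L := by
            rw [norm_mul, norm_pow l]
            exact (mul_le_mul_of_nonneg_left (hM1 x hx) (by positivity)).trans hML'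
          rw [e, norm_mul]
          have := mul_le_mul (ih.1 x hx) h3 (norm_nonneg _) (by positivity)
          refine this.trans (le_of_eq (by ring)))
      rwa [he] at this

/-- coefficients of `exp (-t^2)` -/
def bet (j : ℕ) : ℝ := if Even j then (-1) ^ (j / 2) / ((j / 2).factorial : ℝ) else 0

lemma bet_rec (j : ℕ) : (j + 2 : ℝ) * bet (j + 2) = -2 * bet j := by
  unfold bet
  by_cases h : Even j
  · have h' : Even (j + 2) := by grind
    obtain ⟨m, rfl⟩ := h
    have e1 : (m + m) / 2 = m := by omega
    have e2 : (m + m + 2) / 2 = m + 1 := by omega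
    simp only [h', if_true, e1, e2]
    rw [if_pos ⟨m, rfl⟩]
    have : (m.factorial : ℝ) ≠ 0 := by exact_mod_cast m.factorial_ne_zero
    rw [Nat.factorial_succ]; push_cast; field_simp; ring
  · have h' : ¬ Even (j + 2) := by grind
    simp [h, h']

lemma bet_one : bet 1 = 0 := by simp [bet]

lemma herm_succ_zero (n : ℕ) :
    (hermitePhys (n + 1)).coeff 0 = - (hermitePhys n).coeff 1 := by
  have : hermitePhys (n + 1) = 2 * Polynomial.X * hermitePhys n
    - Polynomial.derivative (hermitePhys n) := rfl
  rw [this, Polynomial.coeff_sub, Polynomial.coeff_derivative, mul_assoc]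
  simp

lemma herm_succ_succ (n k : ℕ) :
    (hermitePhys (n + 1)).coeff (k + 1) = 2 * (hermitePhys n).coeff k
      - (hermitePhys n).coeff (k + 2) * (k + 2) := by
  have : hermitePhys (n + 1) = Polynomial.C 2 * (Polynomial.X * hermitePhys n)
    - Polynomial.derivative (hermitePhys n) := by
      rw [← mul_assoc]; rfl
  rw [this, Polynomial.coeff_sub, Polynomial.coeff_derivative, Polynomial.coeff_C_mul,
    Polynomial.coeff_X_mul]
  push_cast; ring

lemma herm_coeff (n : ℕ) : (∀ k, n < k → (hermitePhys n).coeff k = 0) ∧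
    ∀ k j, k + j = n → (hermitePhys n).coeff k = n.factorial / k.factorial * 2 ^ k * bet j := by
  induction n with
  | zero =>
    constructor
    · intro k hk
      simp [hermitePhys, Polynomial.coeff_one]; omega
    · intro k j h
      obtain ⟨rfl, rfl⟩ : k = 0 ∧ j = 0 := by omega
      simp [hermitePhys, bet]
  | succ n ih =>
    obtain ⟨ih1, ih2⟩ := ih
    constructor
    · intro k hk
      obtain ⟨k, rfl⟩ : ∃ m, k = m + 1 := ⟨k - 1, by omega⟩
      rw [herm_succ_succ, ih1 k (by omega), ih1 (k + 2) (by omega)]; simp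
    · intro k j h
      rcases k with _ | k
      · obtain rfl : j = n + 1 := by omega
        rw [herm_succ_zero]
        rcases n with _ | n
        · rw [ih1 1 (by omega)]; simp [bet_one]
        · rw [ih2 1 n (by omega)]
          have := bet_rec n
          rw [Nat.factorial_succ (n + 1)]; push_cast
          simp only [Nat.factorial_one, Nat.factorial_zero]
          push_cast
          linear_combination (-((n + 1).factorial : ℝ)) * this
      · have hk : k + j = n := by omega
        have fk : (k.factorial : ℝ) ≠ 0 := by exact_mod_cast k.factorial_ne_zero
        rw [herm_succ_succ, ih2 k j hk]
        rcases j with _ | _ | j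
        · rw [ih1 _ (by omega)]
          obtain rfl : k = n := by omega
          rw [Nat.factorial_succ]; push_cast; field_simp; ring
        · rw [ih1 _ (by omega)]; simp [bet_one]
        · rw [ih2 (k + 2) j (by omega)]
          have := bet_rec j
          have hn : (n : ℝ) = k + j + 2 := by rw [← hk]; push_cast; ring
          rw [Nat.factorial_succ n, Nat.factorial_succ (k + 1), Nat.factorial_succ k]
          push_cast
          rw [hn]
          field_simp
          linear_combination (-2 * (k + 2) * 2 ^ k) * this

lemma bet_hasSum (t : ℂ) : HasSum (fun j => (bet j : ℂ) * t ^ j) (Complex.exp (-t ^ 2)) := by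
  have h := NormedSpace.expSeries_div_hasSum_exp (𝔸 := ℂ) (-t ^ 2)
  rw [← Complex.exp_eq_exp_ℂ] at h
  have hi : Function.Injective (fun m : ℕ => 2 * m) := fun a b h => by simpa using h
  rw [← hi.hasSum_iff]
  · refine hasSum_of_eq (fun m => ?_) h
    have : 2 * m / 2 = m := by omega
    simp only [Function.comp, bet, this, even_two_mul, if_true]
    push_cast
    rw [neg_pow (t ^ 2), pow_mul]; ring
  · intro j hj
    have : ¬ Even j := fun ⟨m, hm⟩ => hj ⟨m, by simp; omega⟩
    simp [bet, this]

lemma bet_summable_norm (t : ℂ) : Summable (fun j => ‖(bet j : ℂ) * t ^ j‖) :=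
  (bet_hasSum t).summable.norm

/-- Fourier–Hermite representation of the solution for real ω. -/
theorem solution_hermite_representation
    (b : ℝ) (hb : 0 < b) (q : ℝ → ℂ) (hq : ContinuousOn q (Set.Icc (-b) b))
    (f f' : ℝ → ℂ)
    (hf : ∀ x ∈ Set.Icc (-b) b, HasDerivAt f (f' x) x)
    (hf' : ∀ x ∈ Set.Icc (-b) b, HasDerivAt f' (q x * f x) x)
    (hf0 : f 0 = 1) (hf'0 : f' 0 = 0)
    (hfne : ∀ x ∈ Set.Icc (-b) b, f x ≠ 0)
    (ω : ℝ) (y y' : ℝ → ℂ)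
    (hy : ∀ x ∈ Set.Icc (-b) b, HasDerivAt y (y' x) x)
    (hy' : ∀ x ∈ Set.Icc (-b) b, HasDerivAt y' (q x * y x - (ω : ℂ) ^ 2 * y x) x)
    (hy0 : y 0 = 1) (hy'0 : y' 0 = Complex.I * ω) :
    ∀ x ∈ Set.Icc (-b) b, ∃ S : ℂ,
      Tendsto (fun N : ℕ => ∑ n ∈ Finset.range N, cCoef f n x * (Complex.I * ω) ^ n)
        atTop (𝓝 S) ∧
      y x = Complex.exp (Complex.I * ω * x) +
        (Real.sqrt Real.pi : ℂ) * Complex.exp (-(ω : ℂ) ^ 2 / 4) * S := by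
  intro x hx
  have hz : (0:ℝ) ∈ Set.Icc (-b) b := ⟨by linarith, by linarith⟩
  have hfc : ContinuousOn f (Set.Icc (-b) b) := fun z hz => (hf z hz).continuousAt.continuousWithinAt
  have hfc' : ContinuousOn f' (Set.Icc (-b) b) :=
    fun z hz => (hf' z hz).continuousAt.continuousWithinAt
  have hyc : ContinuousOn y (Set.Icc (-b) b) := fun z hz => (hy z hz).continuousAt.continuousWithinAt
  have hyc' : ContinuousOn y' (Set.Icc (-b) b) :=
    fun z hz => (hy' z hz).continuousAt.continuousWithinAt
  obtain ⟨M1, hM1⟩ := isCompact_Icc.exists_bound_of_continuousOn (hfc.pow 2)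
  obtain ⟨M2, hM2⟩ := isCompact_Icc.exists_bound_of_continuousOn
    ((hfc.pow 2).inv₀ (fun z hz => pow_ne_zero 2 (hfne z hz)))
  set M := max M1 M2 with hMdef
  replace hM1 : ∀ z ∈ Set.Icc (-b) b, ‖f z ^ 2‖ ≤ M := fun z hz => (hM1 z hz).trans (le_max_left _ _)
  replace hM2 : ∀ z ∈ Set.Icc (-b) b, ‖(f z ^ 2)⁻¹‖ ≤ M :=
    fun z hz => (hM2 z hz).trans (le_max_right _ _)
  have hM : 0 ≤ M := (norm_nonneg _).trans (hM1 0 hz)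
  set l : ℂ := Complex.I * ω with hl
  have hl2 : l ^ 2 = -(ω : ℂ) ^ 2 := by rw [hl, mul_pow, Complex.I_sq]; ring
  set v : ℝ → ℂ := fun z => y z / f z with hvdef
  set w : ℝ → ℂ := fun z => f z * y' z - f' z * y z with hwdef
  have hv : ∀ z ∈ Set.Icc (-b) b,
      HasDerivWithinAt v (w z * (f z ^ 2)⁻¹) (Set.Icc (-b) b) z := by
    intro z hz
    have h1 := ((hy z hz).div (hf z hz) (hfne z hz)).hasDerivWithinAt (s := Set.Icc (-b) b)
    refine h1.congr_deriv ?_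
    simp only [hwdef]; rw [div_eq_mul_inv]; ring
  have hw : ∀ z ∈ Set.Icc (-b) b,
      HasDerivWithinAt w (l ^ 2 * (v z * f z ^ 2)) (Set.Icc (-b) b) z := by
    intro z hz
    have h1 := (((hf z hz).mul (hy' z hz)).sub
      ((hf' z hz).mul (hy z hz))).hasDerivWithinAt (s := Set.Icc (-b) b)
    refine h1.congr_deriv ?_
    have := hfne z hz
    simp only [hvdef, hl2]; field_simp; ring
  obtain ⟨K1, hK1⟩ := isCompact_Icc.exists_bound_of_continuousOn
    (fun z hz => (hv z hz).continuousWithinAt : ContinuousOn v (Set.Icc (-b) b))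
  obtain ⟨K2, hK2⟩ := isCompact_Icc.exists_bound_of_continuousOn
    (fun z hz => (hw z hz).continuousWithinAt : ContinuousOn w (Set.Icc (-b) b))
  have hrem := fun N => (remainder hb hfc hfne hM1 hM2 l v w hv hw (by simp [hvdef, hy0, hf0])
    (by simp [hwdef, hf0, hf'0, hy'0]) (max K1 K2)
    (fun z hz => (hK1 z hz).trans (le_max_left _ _))
    (fun z hz => (hK2 z hz).trans (le_max_right _ _)) N).1 x hx
  have hpS : Tendsto (fun N => pS f 0 l N x) atTop (𝓝 (v x)) := by
    rw [tendsto_iff_norm_sub_tendsto_zero]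
    have h0 := (FloorSemiring.tendsto_pow_div_factorial_atTop
      (M * (1 + ‖l‖ ^ 2) * |x|)).const_mul (max K1 K2)
    rw [mul_zero] at h0
    refine squeeze_zero (fun _ => norm_nonneg _) (fun N => ?_) h0
    rw [norm_sub_rev]
    refine (hrem N).trans (le_of_eq ?_)
    rw [mul_pow (M * (1 + ‖l‖ ^ 2))]; ring
  have hsum : Summable (fun k => ‖l ^ k / (k.factorial : ℂ) * fam f 0 k x‖) := by
    refine Summable.of_nonneg_of_le (fun _ => norm_nonneg _) (fun k => ?_)
      (Real.summable_pow_div_factorial (‖l‖ * (M * |x|)))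
    rw [norm_mul, norm_div, norm_pow, Complex.norm_natCast, mul_pow, mul_pow]
    have := (fam_bound hb hfc hfne hM1 hM2 k).1 x hx
    calc _ ≤ ‖l‖ ^ k / k.factorial * (M ^ k * |x| ^ k) := by gcongr
      _ = _ := by ring
  have hS : HasSum (fun k => l ^ k / (k.factorial : ℂ) * fam f 0 k x) (v x) := by
    have h1 := hsum.of_norm.hasSum
    have h2 := tendsto_nhds_unique h1.tendsto_sum_nat hpS
    rwa [h2] at h1
  have hexp := NormedSpace.expSeries_div_hasSum_exp (𝔸 := ℂ) (l * x)
  rw [← Complex.exp_eq_exp_ℂ] at hexp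
  have hA : HasSum (fun k => l ^ k / (k.factorial : ℂ) * (formalPower f k x - (x : ℂ) ^ k))
      (y x - Complex.exp (l * x)) := by
    have h1 := (hS.mul_left (f x)).sub hexp
    have hfx := hfne x hx
    have e : f x * v x = y x := by simp only [hvdef]; field_simp
    rw [e] at h1
    refine hasSum_of_eq (fun k => ?_) h1
    have e2 : formalPower f k x = f x * fam f 0 k x := by
      unfold formalPower fam
      by_cases h : Even k
      · simp [h, Nat.not_odd_iff_even.2 h]
      · simp [h, Nat.not_even_iff_odd.1 h]
    rw [e2, mul_pow]; ring
  have hprod := hasSum_sum_range_mul_of_summable_norm hA.summable.norm (bet_summable_norm (l / 2))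
  rw [hA.tsum_eq, (bet_hasSum (l / 2)).tsum_eq] at hprod
  have hpi : (Real.sqrt Real.pi : ℂ) ≠ 0 := by
    exact_mod_cast (Real.sqrt_pos.2 Real.pi_pos).ne'
  refine ⟨(Real.sqrt Real.pi : ℂ)⁻¹ * ((y x - Complex.exp (l * x)) * Complex.exp (-(l / 2) ^ 2)),
    ?_, ?_⟩
  · have h1 := (hprod.mul_left (Real.sqrt Real.pi : ℂ)⁻¹).tendsto_sum_nat
    refine h1.congr fun N => Finset.sum_congr rfl fun n _ => ?_
    rw [cCoef, mul_assoc, Finset.sum_mul, Finset.mul_sum, Finset.mul_sum]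
    refine Finset.sum_congr rfl fun k hk => ?_
    have hkn : k + (n - k) = n := by have := Finset.mem_range.1 hk; omega
    rw [(herm_coeff n).2 k (n - k) hkn]
    generalize n - k = j at hkn
    have f1 : (k.factorial : ℂ) ≠ 0 := by exact_mod_cast k.factorial_ne_zero
    have f2 : (n.factorial : ℂ) ≠ 0 := by exact_mod_cast n.factorial_ne_zero
    have e1 : l ^ n = l ^ k * l ^ j := by rw [← hkn, pow_add]
    have e3 : (2:ℂ) ^ n = 2 ^ k * 2 ^ j := by rw [← hkn, pow_add]
    rw [e1, e3, div_pow]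
    push_cast
    field_simp
  · have e : Complex.exp (-(ω : ℂ) ^ 2 / 4) * Complex.exp (-(l / 2) ^ 2) = 1 := by
      rw [← Complex.exp_add, div_pow, hl2]
      rw [← Complex.exp_zero]; congr 1; ring
    have e' : (Real.sqrt Real.pi : ℂ) * (Real.sqrt Real.pi : ℂ)⁻¹ = 1 := mul_inv_cancel₀ hpi
    linear_combination (-((y x - Complex.exp (l * x)) * Complex.exp (-(ω : ℂ) ^ 2 / 4) *
      Complex.exp (-(l / 2) ^ 2))) * e' + (-(y x - Complex.exp (l * x))) * e

end
end

section
/- Let b > 0, let q : ℝ → ℂ be continuous on [−b,b], let f solve f'' − q f = 0 on [−b,b] with f(0) = 1, f'(0) = 0, and assume f(x) ≠ 0 on [−b,b]. For ω ∈ ℂ let u(ω,·) be the solution of y'' − q(x)y = −ω² y with y(0) = 1, y'(0) = iω, and define u_N(ω,x) = e^{iωx} + √π e^{−ω²/4} Σ_{n=0}^{N} c_n(x)(iω)ⁿ. Then there exist functions ε_N : [−b,b] → [0,∞) with ε_N(x) → 0 as N → ∞ for every x ∈ [−b,b], such that for all ω ∈ ℂ, all N ∈ ℕ and all x ∈ [−b,b],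 |u(ω,x) − u_N(ω,x)| ≤ π^{1/4} · e^{(Im ω)²/2} · ε_N(x); in particular the truncation error is uniformly bounded in every strip |Im ω| ≤ C. -/
open MeasureTheory Set Filter Finset Complex Topology

noncomputable section

def eco (m : ℕ) : ℂ := if Even m then (-1/4 : ℂ) ^ (m / 2) / (m / 2).factorial else 0

lemma eco_rec (m : ℕ) : ((m : ℂ) + 2) * eco (m + 2) = - eco m / 2 := by
  unfold eco
  rcases Nat.even_or_odd' m with ⟨j, rfl | rfl⟩
  · have h1 : Even (2 * j + 2) := ⟨j + 1, by ring⟩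
    have h2 : Even (2 * j) := ⟨j, by ring⟩
    have h3 : (2 * j + 2) / 2 = j + 1 := by omega
    have h4 : (2 * j) / 2 = j := by omega
    have h5 : (j.factorial : ℂ) ≠ 0 := by exact_mod_cast j.factorial_ne_zero
    have h6 : (j : ℂ) + 1 ≠ 0 := by exact_mod_cast Nat.succ_ne_zero j
    rw [if_pos h1, if_pos h2, h3, h4, Nat.factorial_succ]
    push_cast
    field_simp
    ring
  · have h1 : ¬ Even (2 * j + 1 + 2) := by
      rw [Nat.not_even_iff_odd]; exact ⟨j + 1, by ring⟩
    have h2 : ¬ Even (2 * j + 1) := by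
      rw [Nat.not_even_iff_odd]; exact ⟨j, by ring⟩
    rw [if_neg h1, if_neg h2]; simp

lemma hermite_coeff_aux (n : ℕ) : ∀ k : ℕ,
    ((hermitePhys n).coeff k : ℂ) * k.factorial =
      if k ≤ n then n.factorial * 2 ^ n * eco (n - k) else 0 := by
  induction n with
  | zero =>
    intro k
    rcases k with _ | k
    · simp [hermitePhys, eco]
    · simp [hermitePhys, Polynomial.coeff_one]
  | succ n ih =>
    intro k
    have hrec : ∀ k, (hermitePhys (n + 1)).coeff k =
        2 * (Polynomial.X * hermitePhys n).coeff k - (hermitePhys n).coeff (k + 1) * (k + 1) := by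
      intro k
      have : hermitePhys (n + 1) = Polynomial.C 2 * (Polynomial.X * hermitePhys n)
          - Polynomial.derivative (hermitePhys n) := by
        simp only [hermitePhys]
        rw [← mul_assoc, show (Polynomial.C 2 : Polynomial ℝ) = 2 from rfl]
      rw [this, Polynomial.coeff_sub, Polynomial.coeff_C_mul, Polynomial.coeff_derivative]
    have hn1 : ((n + 1).factorial : ℂ) = (n + 1) * n.factorial := by
      rw [Nat.factorial_succ]; push_cast; ring
    have ih2 := ih (k + 1)
    have hk2 : ((k + 1).factorial : ℂ) = (k + 1) * k.factorial := by
      rw [Nat.factorial_succ]; push_cast; ring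
    rw [hk2] at ih2
    rw [hrec k, hn1]
    rcases k with _ | k
    · simp only [Polynomial.coeff_X_mul_zero]
      simp only [Nat.zero_le, if_true]
      rcases n with _ | n
      · simp [eco, hermitePhys, Polynomial.coeff_one]
      · have e := eco_rec n
        simp only [show 0 + 1 ≤ n + 1 from by omega, if_true, show n + 1 - (0 + 1) = n by omega] at ih2
        push_cast at ih2 ⊢
        try simp only [show n + 1 + 1 - 0 = n + 2 by omega]
        simp at ih2 ⊢
        rw [ih2]
        have : eco n = -2 * (((n : ℂ) + 2) * eco (n + 2)) := by rw [e]; ring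
        rw [this]; ring
    · have ih1 := ih k
      simp only [Polynomial.coeff_X_mul]
      have hk1 : ((k + 1).factorial : ℂ) = (k + 1) * k.factorial := by
        rw [Nat.factorial_succ]; push_cast; ring
      push_cast at ih2 ⊢
      rw [hk1] at ih2 ⊢
      by_cases h : k ≤ n
      · rw [if_pos h] at ih1
        rw [if_pos (by omega)]
        obtain ⟨m, rfl⟩ := Nat.exists_eq_add_of_le h
        try simp only [show k + m + 1 - (k + 1) = m by omega]
        simp only [show k + m - k = m by omega] at ih1 ⊢
        rcases m with _ | _ | m
        · rw [if_neg (by omega)] at ih2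
          have e0 : eco 0 = 1 := by simp [eco]
          rw [e0] at ih1 ⊢
          push_cast at *
          linear_combination 2 * ((k : ℂ) + 1) * ih1 - ih2
        · rw [if_neg (by omega)] at ih2
          have e0 : eco (0 + 1) = 0 := by simp [eco]
          rw [e0] at ih1 ⊢
          push_cast at *
          linear_combination 2 * ((k : ℂ) + 1) * ih1 - ih2
        · rw [if_pos (by omega)] at ih2
          simp only [show k + (m + 1 + 1) - (k + 1 + 1) = m by omega] at ih2
          have e := eco_rec m
          simp only [show m + 1 + 1 = m + 2 by omega] at *
          push_cast at *
          linear_combination 2 * ((k : ℂ) + 1) * ih1 - ih2 - (k + (m + 2)).factorial * 2 ^ (k + (m+2)) * 2 * e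
      · rw [if_neg h] at ih1
        rw [if_neg (by omega)] at ih2
        rw [if_neg (by omega)]
        linear_combination 2 * ((k : ℂ) + 1) * ih1 - ih2

lemma cCoef_eq (f : ℝ → ℂ) (n : ℕ) (x : ℝ) :
    (Real.sqrt Real.pi : ℂ) * cCoef f n x = ∑ k ∈ Finset.range (n + 1),
      ((formalPower f k x - (x : ℂ) ^ k) / k.factorial) * eco (n - k) := by
  have hpi : (Real.sqrt Real.pi : ℂ) ≠ 0 := by
    exact_mod_cast (Real.sqrt_pos.2 Real.pi_pos).ne'
  have hn : (n.factorial : ℂ) ≠ 0 := by exact_mod_cast n.factorial_ne_zero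
  unfold cCoef
  rw [← mul_assoc, Finset.mul_sum]
  refine Finset.sum_congr rfl fun k hk => ?_
  have hk' : k ≤ n := by simpa [Nat.lt_succ_iff] using hk
  have hkf : (k.factorial : ℂ) ≠ 0 := by exact_mod_cast k.factorial_ne_zero
  have h := hermite_coeff_aux n k
  rw [if_pos hk'] at h
  have h2 : ((hermitePhys n).coeff k : ℂ) = n.factorial * 2 ^ n * eco (n - k) / k.factorial := by
    rw [← h]; field_simp
  rw [h2]
  field_simp

lemma eco_hasSum (s : ℂ) : Summable (fun m => ‖eco m * s ^ m‖) ∧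
    HasSum (fun m => eco m * s ^ m) (Complex.exp (-s ^ 2 / 4)) := by
  have hinj : Function.Injective (fun j : ℕ => 2 * j) := fun a b h => by simpa using h
  have hsupp : ∀ m ∉ Set.range (fun j : ℕ => 2 * j), eco m * s ^ m = 0 := by
    intro m hm
    have : ¬ Even m := by
      rintro ⟨j, hj⟩
      exact hm ⟨j, by simp; omega⟩
    simp [eco, this]
  have hval : ∀ j : ℕ, eco (2 * j) * s ^ (2 * j) = (-s ^ 2 / 4) ^ j / j.factorial := by
    intro j
    have h2 : Even (2 * j) := ⟨j, by ring⟩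
    have h4 : (2 * j) / 2 = j := by omega
    simp only [eco, h2, if_true, h4]
    rw [pow_mul, div_mul_eq_mul_div, ← mul_pow]
    congr 2; ring
  constructor
  · rw [← hinj.summable_iff (by intro m hm; simp [hsupp m hm])]
    have := (NormedSpace.expSeries_div_summable (-s ^ 2 / 4 : ℂ)).norm
    refine this.congr fun j => ?_
    simp only [Function.comp, hval]
  · rw [← hinj.hasSum_iff hsupp]
    have := NormedSpace.expSeries_div_hasSum_exp (-s ^ 2 / 4 : ℂ)
    rw [← Complex.exp_eq_exp_ℂ] at this
    have he : ((fun m => eco m * s ^ m) ∘ fun j : ℕ => 2 * j) =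
        fun j : ℕ => (-s ^ 2 / 4) ^ j / (j.factorial : ℂ) := funext hval
    rw [he]
    exact this

lemma cauchy_gen (d e c : ℕ → ℂ) (s F E : ℂ)
    (hc : ∀ n, c n = ∑ k ∈ Finset.range (n + 1), d k * e (n - k))
    (h1 : Summable fun k : ℕ => ‖d k * s ^ k‖)
    (h2 : HasSum (fun k : ℕ => d k * s ^ k) F)
    (e1 : Summable fun k : ℕ => ‖e k * s ^ k‖)
    (e2 : HasSum (fun k : ℕ => e k * s ^ k) E) :
    HasSum (fun n => c n * s ^ n) (F * E) := by
  have key : ∀ n, c n * s ^ n = ∑ k ∈ Finset.range (n + 1),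
      (d k * s ^ k) * (e (n - k) * s ^ (n - k)) := by
    intro n
    rw [hc, Finset.sum_mul]
    refine Finset.sum_congr rfl fun k hk => ?_
    have hk' : k ≤ n := by simpa [Nat.lt_succ_iff] using hk
    have : s ^ n = s ^ k * s ^ (n - k) := by rw [← pow_add]; congr 1; omega
    rw [this]; ring
  have hs : Summable (fun n => ‖c n * s ^ n‖) := by
    have h := summable_norm_sum_mul_range_of_summable_norm (f := fun k => d k * s ^ k)
      (g := fun k => e k * s ^ k) h1 e1
    exact h.congr fun n => by rw [key n]
  have := tsum_mul_tsum_eq_tsum_sum_range_of_summable_norm (f := fun k => d k * s ^ k)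
      (g := fun k => e k * s ^ k) h1 e1
  rw [h2.tsum_eq, e2.tsum_eq] at this
  rw [this]
  have h3 := hs.of_norm.hasSum
  rwa [tsum_congr key] at h3

lemma cauchy_part (f : ℝ → ℂ) (x : ℝ) (s F : ℂ)
    (h1 : Summable fun k : ℕ => ‖(formalPower f k x - (x : ℂ) ^ k) / k.factorial * s ^ k‖)
    (h2 : HasSum (fun k : ℕ => (formalPower f k x - (x : ℂ) ^ k) / k.factorial * s ^ k) F) :
    HasSum (fun n => (Real.sqrt Real.pi : ℂ) * cCoef f n x * s ^ n)
      (F * Complex.exp (-s ^ 2 / 4)) :=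
  cauchy_gen _ _ _ s F _ (fun n => cCoef_eq f n x) h1 h2 (eco_hasSum s).1 (eco_hasSum s).2


lemma formal_congr (b : ℝ) (hb : 0 < b) (f g : ℝ → ℂ) (h : ∀ x ∈ Set.Icc (-b) b, f x = g x) (n : ℕ) :
    ∀ x ∈ Set.Icc (-b) b, formalX f n x = formalX g n x ∧ formalXt f n x = formalXt g n x := by
  induction n with
  | zero => intro x _; simp [formalX, formalXt]
  | succ n ih =>
    intro x hx
    have hsub : Set.uIcc 0 x ⊆ Set.Icc (-b) b :=
      Set.uIcc_subset_Icc ⟨by linarith, hb.le⟩ hx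
    simp only [formalX, formalXt]
    constructor
    · congr 1
      refine intervalIntegral.integral_congr fun s hs => ?_
      simp only [(ih s (hsub hs)).1, h s (hsub hs)]
    · congr 1
      refine intervalIntegral.integral_congr fun s hs => ?_
      simp only [(ih s (hsub hs)).2, h s (hsub hs)]

lemma weight_cont (g : ℝ → ℂ) (hg : Continuous g) (hg0 : ∀ x, g x ≠ 0) (z : ℤ) :
    Continuous fun x => (g x ^ 2) ^ z :=
  (hg.pow 2).zpow₀ z fun x => Or.inl (pow_ne_zero 2 (hg0 x))

lemma formal_deriv (g : ℝ → ℂ) (hg : Continuous g) (hg0 : ∀ x, g x ≠ 0) (n : ℕ) :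
    (Continuous (formalX g n) ∧ Continuous (formalXt g n)) ∧ ∀ x,
    HasDerivAt (formalX g (n + 1)) ((n + 1 : ℂ) * (formalX g n x * (g x ^ 2) ^ ((-1 : ℤ) ^ (n + 1)))) x ∧
    HasDerivAt (formalXt g (n + 1)) ((n + 1 : ℂ) * (formalXt g n x * (g x ^ 2) ^ ((-1 : ℤ) ^ n))) x := by
  have key : ∀ n, Continuous (formalX g n) → Continuous (formalXt g n) → ∀ x,
    HasDerivAt (formalX g (n + 1)) ((n + 1 : ℂ) * (formalX g n x * (g x ^ 2) ^ ((-1 : ℤ) ^ (n + 1)))) x ∧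
    HasDerivAt (formalXt g (n + 1)) ((n + 1 : ℂ) * (formalXt g n x * (g x ^ 2) ^ ((-1 : ℤ) ^ n))) x := by
    intro n h1 h2 x
    constructor
    · have hc : Continuous fun s => formalX g n s * ((g s) ^ 2) ^ ((-1 : ℤ) ^ (n + 1)) :=
        h1.mul (weight_cont g hg hg0 _)
      exact (hc.integral_hasStrictDerivAt 0 x).hasDerivAt.const_mul _
    · have hc : Continuous fun s => formalXt g n s * ((g s) ^ 2) ^ ((-1 : ℤ) ^ n) :=
        h2.mul (weight_cont g hg hg0 _)
      exact (hc.integral_hasStrictDerivAt 0 x).hasDerivAt.const_mul _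
  have hc : Continuous (formalX g n) ∧ Continuous (formalXt g n) := by
    induction n with
    | zero => exact ⟨continuous_const, continuous_const⟩
    | succ n ih =>
      have := key n ih.1 ih.2
      exact ⟨continuous_iff_continuousAt.2 fun x => (this x).1.continuousAt,
        continuous_iff_continuousAt.2 fun x => (this x).2.continuousAt⟩
  exact ⟨hc, key n hc.1 hc.2⟩

def Yk (g : ℝ → ℂ) (k : ℕ) (x : ℝ) : ℂ := if Odd k then formalX g k x else formalXt g k x
def Zk (g : ℝ → ℂ) (k : ℕ) (x : ℝ) : ℂ := if Odd k then formalXt g k x else formalX g k x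

lemma YZ_deriv (g : ℝ → ℂ) (hg : Continuous g) (hg0 : ∀ x, g x ≠ 0) (k : ℕ) (x : ℝ) :
    HasDerivAt (Yk g (k + 1)) ((k + 1 : ℂ) * (Zk g k x * (g x ^ 2)⁻¹)) x ∧
    HasDerivAt (Zk g (k + 1)) ((k + 1 : ℂ) * (Yk g k x * (g x ^ 2))) x := by
  obtain ⟨_, h⟩ := formal_deriv g hg hg0 k
  obtain ⟨h1, h2⟩ := h x
  rcases Nat.even_or_odd k with hk | hk
  · have e1 : ¬ Odd k := Nat.not_odd_iff_even.2 hk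
    have e2 : Odd (k + 1) := hk.add_one
    have y1 : Yk g (k + 1) = formalX g (k + 1) := by funext x; simp only [Yk, if_pos e2]
    have y2 : Zk g (k + 1) = formalXt g (k + 1) := by funext x; simp only [Zk, if_pos e2]
    rw [y1, y2]
    simp only [Yk, Zk, if_neg e1]
    rw [e2.neg_one_pow, zpow_neg_one] at h1
    rw [hk.neg_one_pow, zpow_one] at h2
    exact ⟨h1, h2⟩
  · have e2 : Even (k + 1) := hk.add_one
    have e3 : ¬ Odd (k + 1) := Nat.not_odd_iff_even.2 e2
    have y1 : Yk g (k + 1) = formalXt g (k + 1) := by funext x; simp only [Yk, if_neg e3]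
    have y2 : Zk g (k + 1) = formalX g (k + 1) := by funext x; simp only [Zk, if_neg e3]
    rw [y1, y2]
    simp only [Yk, Zk, if_pos hk]
    rw [e2.neg_one_pow, zpow_one] at h1
    rw [hk.neg_one_pow, zpow_neg_one] at h2
    exact ⟨h2, h1⟩

lemma bound_step (F h : ℝ → ℂ) (C : ℝ) (k : ℕ) (hF : ∀ x, HasDerivAt F (h x) x) (hh : Continuous h)
    (h0 : F 0 = 0) (hb : ∀ x, ‖h x‖ ≤ C * |x| ^ k) (x : ℝ) :
    ‖F x‖ ≤ C * |x| ^ (k + 1) / (k + 1) := by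
  have e : F x = ∫ s in (0:ℝ)..x, h s := by
    rw [intervalIntegral.integral_eq_sub_of_hasDerivAt (fun s _ => hF s) (hh.intervalIntegrable _ _),
      h0, sub_zero]
  rw [e]
  refine (intervalIntegral.norm_integral_le_integral_norm_uIoc).trans ?_
  have h1 := integral_pow_abs_sub_uIoc (a := 0) (b := x) (n := k)
  simp only [sub_zero] at h1
  rw [mul_div_assoc, ← h1, ← integral_const_mul]
  refine setIntegral_mono_on ?_ ?_ measurableSet_uIoc fun s _ => hb s
  · exact (hh.norm.integrableOn_uIcc).mono_set Set.uIoc_subset_uIcc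
  · exact (Continuous.integrableOn_uIcc (by fun_prop)).mono_set Set.uIoc_subset_uIcc

lemma formal_zero (g : ℝ → ℂ) (k : ℕ) : formalX g (k + 1) 0 = 0 ∧ formalXt g (k + 1) 0 = 0 := by
  simp [formalX, formalXt]

lemma YZ_bound (g : ℝ → ℂ) (hg : Continuous g) (hg0 : ∀ x, g x ≠ 0) (M : ℝ)
    (hM1 : ∀ x, ‖g x ^ 2‖ ≤ M) (hM2 : ∀ x, ‖(g x ^ 2)⁻¹‖ ≤ M) (k : ℕ) :
    ∀ x, ‖Yk g k x‖ ≤ (M * |x|) ^ k ∧ ‖Zk g k x‖ ≤ (M * |x|) ^ k := by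
  have hM : 0 ≤ M := (norm_nonneg _).trans (hM1 0)
  induction k with
  | zero => intro x; simp [Yk, Zk, formalX, formalXt]
  | succ k ih =>
    intro x
    have hc := (formal_deriv g hg hg0 k).1
    have hYc : Continuous (Yk g k) := by
      by_cases h : Odd k
      · have : Yk g k = formalX g k := by funext x; simp only [Yk, if_pos h]
        rw [this]; exact hc.1
      · have : Yk g k = formalXt g k := by funext x; simp only [Yk, if_neg h]
        rw [this]; exact hc.2
    have hZc : Continuous (Zk g k) := by
      by_cases h : Odd k
      · have : Zk g k = formalXt g k := by funext x; simp only [Zk, if_pos h]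
        rw [this]; exact hc.2
      · have : Zk g k = formalX g k := by funext x; simp only [Zk, if_neg h]
        rw [this]; exact hc.1
    have hinv : Continuous fun x => (g x ^ 2)⁻¹ := (hg.pow 2).inv₀ fun x => pow_ne_zero 2 (hg0 x)
    have hk1 : ‖((k : ℂ) + 1)‖ = (k : ℝ) + 1 := by
      have : ((k : ℂ) + 1) = ((k + 1 : ℕ) : ℂ) := by push_cast; ring
      rw [this, Complex.norm_natCast]; push_cast; ring
    have hpos : (0 : ℝ) < (k : ℝ) + 1 := by positivity
    have fin : ∀ x : ℝ, ((k : ℝ) + 1) * M ^ (k + 1) * |x| ^ (k + 1) / (k + 1) = (M * |x|) ^ (k + 1) := by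
      intro x; rw [mul_pow]; field_simp
    constructor
    · rw [← fin]
      refine bound_step _ _ _ k (fun x => (YZ_deriv g hg hg0 k x).1) ?_ ?_ ?_ x
      · exact continuous_const.mul (hZc.mul hinv)
      · simp [Yk, formal_zero]
      · intro x
        rw [norm_mul, norm_mul, hk1]
        calc ((k : ℝ) + 1) * (‖Zk g k x‖ * ‖(g x ^ 2)⁻¹‖)
            ≤ ((k : ℝ) + 1) * ((M * |x|) ^ k * M) := by
              gcongr
              · exact (ih x).2
              · exact hM2 x
          _ = _ := by ring
    · rw [← fin]
      refine bound_step _ _ _ k (fun x => (YZ_deriv g hg hg0 k x).2) ?_ ?_ ?_ x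
      · exact continuous_const.mul (hYc.mul (hg.pow 2))
      · simp [Zk, formal_zero]
      · intro x
        rw [norm_mul, norm_mul, hk1]
        calc ((k : ℝ) + 1) * (‖Yk g k x‖ * ‖g x ^ 2‖)
            ≤ ((k : ℝ) + 1) * ((M * |x|) ^ k * M) := by
              gcongr
              · exact (ih x).1
              · exact hM1 x
          _ = _ := by ring

lemma series_term_bound (Y : ℕ → ℝ → ℂ) (M : ℝ) (s : ℂ)
    (hYb : ∀ k x, ‖Y k x‖ ≤ (M * |x|) ^ k) (k : ℕ) (x : ℝ) :
    ‖Y k x / k.factorial * s ^ k‖ ≤ (M * |x| * ‖s‖) ^ k / k.factorial := by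
  rw [norm_mul, norm_div, norm_pow, Complex.norm_natCast, mul_pow, div_mul_eq_mul_div]
  gcongr
  exact hYb k x

lemma series_deriv (Y Z : ℕ → ℝ → ℂ) (p : ℝ → ℂ) (M : ℝ) (hM : 0 ≤ M) (s : ℂ)
    (hY0 : ∀ x, Y 0 x = 1)
    (hY : ∀ (k : ℕ) x, HasDerivAt (Y (k + 1)) (((k : ℂ) + 1) * (Z k x * p x)) x)
    (hYb : ∀ k x, ‖Y k x‖ ≤ (M * |x|) ^ k) (hZb : ∀ k x, ‖Z k x‖ ≤ (M * |x|) ^ k)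
    (hp : ∀ x, ‖p x‖ ≤ M) (x : ℝ) :
    HasDerivAt (fun x => ∑' k, Y k x / k.factorial * s ^ k)
      (s * p x * ∑' k, Z k x / k.factorial * s ^ k) x := by
  let R := |x| + 1
  let g' : ℕ → ℝ → ℂ := fun n y => Nat.casesOn n 0 (fun k => s * p y * (Z k y / k.factorial * s ^ k))
  let u : ℕ → ℝ := fun n => Nat.casesOn n 0 (fun k => ‖s‖ * M * ((M * R * ‖s‖) ^ k / k.factorial))
  have hu : Summable u := by
    rw [← summable_nat_add_iff 1]
    exact (Real.summable_pow_div_factorial _).mul_left _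
  have hxR : x ∈ Metric.ball (0 : ℝ) R := by simp [R]
  have hg' : ∀ n y, y ∈ Metric.ball (0 : ℝ) R → ‖g' n y‖ ≤ u n := by
    intro n y hy
    have hy' : |y| ≤ R := by simpa using (Metric.mem_ball.1 hy).le
    rcases n with _ | k
    · simp [g', u]
    · simp only [g', u]
      rw [norm_mul, norm_mul]
      gcongr
      · exact hp y
      · refine (series_term_bound Z M s hZb k y).trans ?_
        gcongr
  have main := hasDerivAt_tsum_of_isPreconnected (t := Metric.ball (0 : ℝ) R)
    (g := fun n y => Y n y / n.factorial * s ^ n) (g' := g') (y₀ := x) (y := x) hu Metric.isOpen_ball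
    (convex_ball _ _).isPreconnected ?_ hg' hxR ?_ hxR
  · refine HasDerivAt.congr_deriv main ?_
    rw [Summable.tsum_eq_zero_add (Summable.of_norm_bounded hu fun n => hg' n x hxR)]
    simp only [g']
    rw [tsum_mul_left]
    exact zero_add _
  · intro n y _
    rcases n with _ | k
    · simp only [hY0, g']
      exact hasDerivAt_const _ _
    · have := ((hY k y).div_const ((k + 1).factorial : ℂ)).mul_const (s ^ (k + 1))
      refine HasDerivAt.congr_deriv this ?_
      simp only [g']
      have h5 : (k.factorial : ℂ) ≠ 0 := by exact_mod_cast k.factorial_ne_zero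
      have h6 : (k : ℂ) + 1 ≠ 0 := by exact_mod_cast Nat.succ_ne_zero k
      rw [Nat.factorial_succ]
      push_cast
      field_simp
      ring
  · exact Summable.of_norm_bounded (Real.summable_pow_div_factorial _)
      fun n => series_term_bound Y M s hYb n x

lemma spps (b : ℝ) (hb : 0 < b) (q : ℝ → ℂ)
    (f f' : ℝ → ℂ)
    (hf : ∀ x ∈ Set.Icc (-b) b, HasDerivAt f (f' x) x)
    (hf' : ∀ x ∈ Set.Icc (-b) b, HasDerivAt f' (q x * f x) x)
    (hf0 : f 0 = 1) (hf'0 : f' 0 = 0)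
    (hfne : ∀ x ∈ Set.Icc (-b) b, f x ≠ 0) :
    ∃ M : ℝ, 0 ≤ M ∧ ∀ w : ℂ, ∃ y y' : ℝ → ℂ,
      (∀ x ∈ Set.Icc (-b) b, HasDerivAt y (y' x) x) ∧
      (∀ x ∈ Set.Icc (-b) b, HasDerivAt y' (q x * y x - w ^ 2 * y x) x) ∧
      y 0 = 1 ∧ y' 0 = Complex.I * w ∧
      ∀ x ∈ Set.Icc (-b) b,
        (Summable fun k : ℕ => ‖(formalPower f k x - (x : ℂ) ^ k) / k.factorial * (Complex.I * w) ^ k‖) ∧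
        HasSum (fun k : ℕ => (formalPower f k x - (x : ℂ) ^ k) / k.factorial * (Complex.I * w) ^ k)
          (y x - Complex.exp (Complex.I * w * x)) ∧
        ‖y x‖ ≤ ‖f x‖ * Real.exp (M * |x| * ‖w‖) := by
  have hle : -b ≤ b := by linarith
  let g : ℝ → ℂ := fun x => f (Set.projIcc (-b) b hle x)
  have hfc : ContinuousOn f (Set.Icc (-b) b) := fun x hx => (hf x hx).continuousAt.continuousWithinAt
  have hg : Continuous g := by
    have : Continuous (Set.IccExtend hle ((Set.Icc (-b) b).domRestrict f)) :=
      (continuousOn_iff_continuous_domRestrict.1 hfc).Icc_extend'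
    exact this
  have hgf : ∀ x ∈ Set.Icc (-b) b, f x = g x := by
    intro x hx
    simp only [g, Set.projIcc_of_mem hle hx]
  have hg0 : ∀ x, g x ≠ 0 := fun x => hfne _ (Set.projIcc (-b) b hle x).2
  have hc1 : ContinuousOn (fun x => ‖f x ^ 2‖) (Set.Icc (-b) b) := (hfc.pow 2).norm
  have hc2 : ContinuousOn (fun x => ‖(f x ^ 2)⁻¹‖) (Set.Icc (-b) b) :=
    ((hfc.pow 2).inv₀ fun x hx => pow_ne_zero 2 (hfne x hx)).norm
  obtain ⟨M1, hM1⟩ := isCompact_Icc.bddAbove_image hc1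
  obtain ⟨M2, hM2⟩ := isCompact_Icc.bddAbove_image hc2
  let M := max M1 M2
  have hm1 : ∀ x, ‖g x ^ 2‖ ≤ M := fun x =>
    (hM1 ⟨_, (Set.projIcc (-b) b hle x).2, rfl⟩).trans (le_max_left _ _)
  have hm2 : ∀ x, ‖(g x ^ 2)⁻¹‖ ≤ M := fun x =>
    (hM2 ⟨_, (Set.projIcc (-b) b hle x).2, rfl⟩).trans (le_max_right _ _)
  have hM : 0 ≤ M := (norm_nonneg _).trans (hm1 0)
  have hB := YZ_bound g hg hg0 M hm1 hm2
  refine ⟨M, hM, fun w => ?_⟩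
  let s := Complex.I * w
  have hsn : ‖s‖ = ‖w‖ := by simp [s]
  let A : ℝ → ℂ := fun x => ∑' k, Yk g k x / k.factorial * s ^ k
  let B : ℝ → ℂ := fun x => ∑' k, Zk g k x / k.factorial * s ^ k
  have hA : ∀ x, HasDerivAt A (s * (g x ^ 2)⁻¹ * B x) x := fun x =>
    series_deriv (Yk g) (Zk g) (fun x => (g x ^ 2)⁻¹) M hM s (fun x => by simp [Yk, formalXt])
      (fun k x => (YZ_deriv g hg hg0 k x).1) (fun k x => (hB k x).1) (fun k x => (hB k x).2) hm2 x
  have hBd : ∀ x, HasDerivAt B (s * (g x ^ 2) * A x) x := fun x =>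
    series_deriv (Zk g) (Yk g) (fun x => (g x ^ 2)) M hM s (fun x => by simp [Zk, formalX])
      (fun k x => (YZ_deriv g hg hg0 k x).2) (fun k x => (hB k x).2) (fun k x => (hB k x).1) hm1 x
  have hAsum : ∀ x, HasSum (fun k : ℕ => Yk g k x / k.factorial * s ^ k) (A x) := fun x =>
    (Summable.of_norm_bounded (Real.summable_pow_div_factorial _)
      fun n => series_term_bound (Yk g) M s (fun k x => (hB k x).1) n x).hasSum
  have h0 : (0:ℝ) ∈ Set.Icc (-b) b := ⟨by linarith, hb.le⟩
  have hA0 : A 0 = 1 := by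
    simp only [A]
    rw [tsum_eq_single 0]
    · simp [Yk, formalXt]
    · intro k hk
      obtain ⟨k, rfl⟩ := Nat.exists_eq_succ_of_ne_zero hk
      simp [Yk, formal_zero]
  have hB0 : B 0 = 1 := by
    simp only [B]
    rw [tsum_eq_single 0]
    · simp [Zk, formalX]
    · intro k hk
      obtain ⟨k, rfl⟩ := Nat.exists_eq_succ_of_ne_zero hk
      simp [Zk, formal_zero]
  have hs2 : s * s = - w ^ 2 := by
    simp only [s]; linear_combination w ^ 2 * Complex.I_mul_I
  refine ⟨fun x => f x * A x, fun x => f' x * A x + s * B x / f x, ?_, ?_, ?_, ?_, ?_⟩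
  · intro x hx
    have := (hf x hx).mul (hA x)
    refine HasDerivAt.congr_deriv this ?_
    rw [← hgf x hx]
    have := hfne x hx
    field_simp
  · intro x hx
    have := ((hf' x hx).mul (hA x)).add ((((hBd x).const_mul s)).div (hf x hx) (hfne x hx))
    refine HasDerivAt.congr_deriv this ?_
    rw [← hgf x hx]
    have := hfne x hx
    have e : w ^ 2 = - (s * s) := by rw [hs2]; ring
    rw [e]
    field_simp
    ring
  · simp [hf0, hA0]
  · simp [hf0, hf'0, hB0, s]
  · intro x hx
    have hphi : ∀ k, formalPower f k x = f x * Yk g k x := by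
      intro k
      have := formal_congr b hb f g hgf k x hx
      unfold formalPower Yk
      rw [this.1, this.2]
      split_ifs <;> rfl
    have hexp := NormedSpace.expSeries_div_hasSum_exp (s * x : ℂ)
    rw [← Complex.exp_eq_exp_ℂ] at hexp
    have hexpn := (NormedSpace.expSeries_div_summable (s * x : ℂ)).norm
    have hAn : Summable (fun k : ℕ => ‖Yk g k x / k.factorial * s ^ k‖) :=
      Summable.of_nonneg_of_le (fun _ => norm_nonneg _)
        (fun n => series_term_bound (Yk g) M s (fun k x => (hB k x).1) n x)
        (Real.summable_pow_div_factorial _)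
    have hterm : ∀ k : ℕ, (formalPower f k x - (x : ℂ) ^ k) / k.factorial * s ^ k =
        f x * (Yk g k x / k.factorial * s ^ k) - (s * x) ^ k / k.factorial := by
      intro k; rw [hphi, mul_pow]; ring
    refine ⟨?_, ?_, ?_⟩
    · refine Summable.of_nonneg_of_le (fun _ => norm_nonneg _) (fun k => ?_)
        ((hAn.mul_left ‖f x‖).add hexpn)
      rw [hterm, ← norm_mul]
      exact norm_sub_le _ _
    · have h3 := ((hAsum x).mul_left (f x)).sub hexp
      have he : (fun k : ℕ => (formalPower f k x - (x : ℂ) ^ k) / k.factorial * s ^ k) =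
        fun k : ℕ => f x * (Yk g k x / k.factorial * s ^ k) - (s * x) ^ k / k.factorial := funext hterm
      rw [he]
      exact h3
    · rw [norm_mul]
      gcongr
      have h4 : HasSum (fun k : ℕ => (M * |x| * ‖s‖) ^ k / k.factorial) (Real.exp (M * |x| * ‖w‖)) := by
        have := NormedSpace.expSeries_div_hasSum_exp (M * |x| * ‖s‖ : ℝ)
        rw [← Real.exp_eq_exp_ℝ, hsn] at this
        rw [hsn]
        exact this
      exact tsum_of_norm_bounded h4
        fun n => series_term_bound (Yk g) M s (fun k x => (hB k x).1) n x


lemma est_aux (b : ℝ) (q : ℝ → ℂ) (Q : ℝ)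
    (hQ : ∀ x ∈ Set.Icc 0 b, ‖q x‖ ≤ Q) (w z : ℂ) (hz : z ^ 2 = - w ^ 2) (hzr : |z.re| ≤ |w.im|)
    (y y' : ℝ → ℂ)
    (hy : ∀ x ∈ Set.Icc 0 b, HasDerivAt y (y' x) x)
    (hy' : ∀ x ∈ Set.Icc 0 b, HasDerivAt y' (q x * y x - w ^ 2 * y x) x)
    (hy0 : y 0 = 1) (hy'0 : y' 0 = Complex.I * w) (V : ℝ → ℝ) (hV0 : V 0 = 0)
    (hV : ∀ t ∈ Set.Icc 0 b, HasDerivAt V (Real.exp (-|w.im| * t) * ‖y t‖) t)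
    (x : ℝ) (hx : x ∈ Set.Icc 0 b) :
    ‖(y' x - Complex.I * w * Complex.exp (Complex.I * w * x)) +
      z * (y x - Complex.exp (Complex.I * w * x))‖ ≤ Real.exp (|w.im| * x) * Q * V x := by
  have hsub : ∀ t ∈ Set.Icc 0 x, t ∈ Set.Icc 0 b := fun t ht => ⟨ht.1, ht.2.trans hx.2⟩
  let h : ℝ → ℂ := fun t => Complex.exp (z * (x - t)) *
    ((y' t - Complex.I * w * Complex.exp (Complex.I * w * t)) +
      z * (y t - Complex.exp (Complex.I * w * t)))
  have hd : ∀ t ∈ Set.Icc 0 x, HasDerivAt h (Complex.exp (z * (x - t)) * (q t * y t)) t := by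
    intro t ht
    have hid : HasDerivAt (fun t : ℝ => (t : ℂ)) 1 t := Complex.ofRealCLM.hasDerivAt
    have h1 : HasDerivAt (fun t : ℝ => Complex.exp (Complex.I * w * t))
        (Complex.exp (Complex.I * w * t) * (Complex.I * w * 1)) t := (hid.const_mul _).cexp
    have h2 : HasDerivAt (fun t : ℝ => Complex.exp (z * (x - t)))
        (Complex.exp (z * (x - t)) * (z * (0 - 1))) t :=
      (((hasDerivAt_const t (x : ℂ)).sub hid).const_mul z).cexp
    have h3 := h2.mul (((hy' t (hsub t ht)).sub (h1.const_mul (Complex.I * w))).add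
      (((hy t (hsub t ht)).sub h1).const_mul z))
    refine HasDerivAt.congr_deriv h3 ?_
    have hI : Complex.I ^ 2 = -1 := Complex.I_sq
    simp only [Pi.add_apply, Pi.sub_apply]
    linear_combination (-Complex.exp (z * (x - t)) * w ^ 2 * Complex.exp (Complex.I * w * t)) * hI
      - Complex.exp (z * (x - t)) * (y t - Complex.exp (Complex.I * w * t)) * hz
  have key := image_norm_le_of_norm_deriv_right_le_deriv_boundary' (f := h)
    (f' := fun t => Complex.exp (z * (x - t)) * (q t * y t)) (a := 0) (b := x)
    (B := fun t => Real.exp (|w.im| * x) * Q * V t)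
    (B' := fun t => Real.exp (|w.im| * x) * Q * (Real.exp (-|w.im| * t) * ‖y t‖))
    (fun t ht => (hd t ht).continuousAt.continuousWithinAt)
    (fun t ht => (hd t ⟨ht.1, ht.2.le⟩).hasDerivWithinAt) ?_ ?_ ?_ ?_ (x := x) ⟨hx.1, le_rfl⟩
  · simpa [h] using key
  · simp [h, hy0, hy'0, hV0]
  · exact fun t ht => ((hV t (hsub t ht)).const_mul _).continuousAt.continuousWithinAt
  · exact fun t ht => ((hV t (hsub t ⟨ht.1, ht.2.le⟩)).const_mul _).hasDerivWithinAt
  · intro t ht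
    have ht' : t ∈ Set.Icc 0 x := ⟨ht.1, ht.2.le⟩
    rw [norm_mul, norm_mul, Complex.norm_exp]
    have e1 : (z * ((x : ℂ) - t)).re = z.re * (x - t) := by simp
    rw [e1]
    have e2 : Real.exp (z.re * (x - t)) ≤ Real.exp (|w.im| * x) * Real.exp (-|w.im| * t) := by
      rw [← Real.exp_add]
      apply Real.exp_le_exp.2
      have : z.re ≤ |w.im| := (le_abs_self _).trans hzr
      nlinarith [mul_le_mul_of_nonneg_right this (sub_nonneg.2 ht'.2)]
    have e3 := hQ t (hsub t ht')
    calc Real.exp (z.re * (x - t)) * (‖q t‖ * ‖y t‖)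
        ≤ (Real.exp (|w.im| * x) * Real.exp (-|w.im| * t)) * (Q * ‖y t‖) := by gcongr
      _ = _ := by ring

lemma est (b : ℝ) (hb : 0 ≤ b) (q : ℝ → ℂ) (Q : ℝ)
    (hQ : ∀ x ∈ Set.Icc 0 b, ‖q x‖ ≤ Q) (w : ℂ) (hw : 1 ≤ ‖w‖)
    (y y' : ℝ → ℂ)
    (hy : ∀ x ∈ Set.Icc 0 b, HasDerivAt y (y' x) x)
    (hy' : ∀ x ∈ Set.Icc 0 b, HasDerivAt y' (q x * y x - w ^ 2 * y x) x)
    (hy0 : y 0 = 1) (hy'0 : y' 0 = Complex.I * w) (x : ℝ) (hx : x ∈ Set.Icc 0 b) :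
    ‖y x - Complex.exp (Complex.I * w * x)‖ ≤
      Real.exp (|w.im| * x) * (Q * gronwallBound 0 Q 1 x) / ‖w‖ := by
  have hQ0 : 0 ≤ Q := (norm_nonneg _).trans (hQ x hx)
  have hw0 : w ≠ 0 := by rintro rfl; simp at hw; linarith
  let v : ℝ → ℝ := fun t => Real.exp (-|w.im| * t) * ‖y (Set.projIcc 0 b hb t)‖
  have hyc : ContinuousOn y (Set.Icc 0 b) := fun x hx => (hy x hx).continuousAt.continuousWithinAt
  have hyc' : Continuous fun t => y (Set.projIcc 0 b hb t) := by
    have : Continuous (Set.IccExtend hb ((Set.Icc 0 b).domRestrict y)) :=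
      (continuousOn_iff_continuous_domRestrict.1 hyc).Icc_extend'
    exact this
  have hvc : Continuous v := by
    refine Continuous.mul (by fun_prop) hyc'.norm
  let V : ℝ → ℝ := fun x => ∫ t in (0:ℝ)..x, v t
  have hVd : ∀ t, HasDerivAt V (v t) t := fun t => (hvc.integral_hasStrictDerivAt 0 t).hasDerivAt
  have hv : ∀ t ∈ Set.Icc 0 b, v t = Real.exp (-|w.im| * t) * ‖y t‖ := by
    intro t ht
    simp only [v, Set.projIcc_of_mem hb ht]
  have hV0 : V 0 = 0 := by simp [V]
  have hV : ∀ t ∈ Set.Icc 0 b, HasDerivAt V (Real.exp (-|w.im| * t) * ‖y t‖) t := fun t ht => by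
    rw [← hv t ht]; exact hVd t
  have hVnn : ∀ t, 0 ≤ t → 0 ≤ V t := fun t ht =>
    intervalIntegral.integral_nonneg ht fun s _ => by positivity
  have hD : ∀ t ∈ Set.Icc 0 b, ‖y t - Complex.exp (Complex.I * w * t)‖ ≤
      Real.exp (|w.im| * t) * (Q * V t) / ‖w‖ := by
    intro t ht
    have hI : Complex.I ^ 2 = -1 := Complex.I_sq
    have p1 := est_aux b q Q hQ w (Complex.I * w) (by linear_combination w ^ 2 * hI) (by simp)
      y y' hy hy' hy0 hy'0 V hV0 hV t ht
    have p2 := est_aux b q Q hQ w (-(Complex.I * w)) (by linear_combination w ^ 2 * hI) (by simp)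
      y y' hy hy' hy0 hy'0 V hV0 hV t ht
    have p3 := (norm_sub_le _ _).trans (add_le_add p1 p2)
    have e : ∀ a d : ℂ, (a + Complex.I * w * d) - (a + -(Complex.I * w) * d) = 2 * Complex.I * w * d := by
      intro a d; ring
    rw [e, norm_mul, norm_mul, norm_mul, Complex.norm_I] at p3
    simp only [Complex.norm_ofNat, mul_one] at p3
    rw [le_div_iff₀ (by positivity)]
    nlinarith
  have hbound : ∀ t ∈ Set.Icc 0 b, v t ≤ Q * V t + 1 := by
    intro t ht
    have h1 := hD t ht
    have hVt := hVnn t ht.1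
    have h2 : Real.exp (|w.im| * t) * (Q * V t) / ‖w‖ ≤ Real.exp (|w.im| * t) * (Q * V t) :=
      div_le_self (by positivity) hw
    have h3 : ‖Complex.exp (Complex.I * w * t)‖ ≤ Real.exp (|w.im| * t) := by
      rw [Complex.norm_exp]
      apply Real.exp_le_exp.2
      have : (Complex.I * w * t).re = - w.im * t := by simp
      rw [this]
      have := neg_abs_le w.im
      nlinarith [ht.1]
    have h4 : ‖y t‖ ≤ Real.exp (|w.im| * t) * (Q * V t + 1) := by
      have : y t = (y t - Complex.exp (Complex.I * w * t)) + Complex.exp (Complex.I * w * t) := by ring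
      rw [this]
      refine (norm_add_le _ _).trans ?_
      linarith
    rw [hv t ht]
    calc _ ≤ Real.exp (-|w.im| * t) * (Real.exp (|w.im| * t) * (Q * V t + 1)) := by gcongr
      _ = _ := by
        rw [← mul_assoc, ← Real.exp_add]
        simp
  have g := norm_le_gronwallBound_of_norm_deriv_right_le (f := V) (f' := v) (δ := 0) (K := Q) (ε := 1)
    (a := 0) (b := b) (fun t _ => (hVd t).continuousAt.continuousWithinAt)
    (fun t _ => (hVd t).hasDerivWithinAt) (by simp [hV0]) (fun t ht => by
      have ht' : t ∈ Set.Icc 0 b := ⟨ht.1, ht.2.le⟩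
      rw [Real.norm_of_nonneg (hVnn t ht.1), Real.norm_of_nonneg (by positivity)]
      exact hbound t ht') x hx
  rw [sub_zero] at g
  refine (hD x hx).trans ?_
  gcongr
  exact (le_abs_self _).trans g

lemma est_abs (b : ℝ) (hb : 0 < b) (q : ℝ → ℂ) (Q : ℝ)
    (hQ : ∀ x ∈ Set.Icc (-b) b, ‖q x‖ ≤ Q) (w : ℂ) (hw : 1 ≤ ‖w‖)
    (y y' : ℝ → ℂ)
    (hy : ∀ x ∈ Set.Icc (-b) b, HasDerivAt y (y' x) x)
    (hy' : ∀ x ∈ Set.Icc (-b) b, HasDerivAt y' (q x * y x - w ^ 2 * y x) x)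
    (hy0 : y 0 = 1) (hy'0 : y' 0 = Complex.I * w) (x : ℝ) (hx : x ∈ Set.Icc (-b) b) :
    ‖y x - Complex.exp (Complex.I * w * x)‖ ≤
      Real.exp (|w.im| * |x|) * (Q * gronwallBound 0 Q 1 |x|) / ‖w‖ := by
  rcases le_total 0 x with h | h
  · rw [abs_of_nonneg h]
    have hs : ∀ t ∈ Set.Icc 0 b, t ∈ Set.Icc (-b) b := fun t ht => ⟨by linarith [ht.1], ht.2⟩
    exact est b hb.le q Q (fun t ht => hQ t (hs t ht)) w hw y y' (fun t ht => hy t (hs t ht))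
      (fun t ht => hy' t (hs t ht)) hy0 hy'0 x ⟨h, hx.2⟩
  · rw [abs_of_nonpos h]
    have hs : ∀ t ∈ Set.Icc 0 b, -t ∈ Set.Icc (-b) b := fun t ht =>
      ⟨by linarith [ht.2], by linarith [ht.1]⟩
    have hneg : ∀ t : ℝ, HasDerivAt (fun t : ℝ => -t) (-1) t := fun t => hasDerivAt_neg t
    have := est b hb.le (fun t => q (-t)) Q (fun t ht => hQ _ (hs t ht)) (-w) (by simpa using hw)
      (fun t => y (-t)) (fun t => - y' (-t))
      (fun t ht => by
        have := (hy _ (hs t ht)).scomp t (hneg t)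
        refine HasDerivAt.congr_deriv this ?_
        simp)
      (fun t ht => by
        have := ((hy' _ (hs t ht)).scomp t (hneg t)).neg
        refine HasDerivAt.congr_deriv this ?_
        simp) (by simp [hy0]) (by simp [hy'0]) (-x) ⟨by linarith, by linarith [hx.1]⟩
    simpa using this

lemma ode_unique (b : ℝ) (hb : 0 < b) (q : ℝ → ℂ) (Q : ℝ)
    (hQ : ∀ x ∈ Set.Icc (-b) b, ‖q x‖ ≤ Q) (w : ℂ)
    (y y' u u' : ℝ → ℂ)
    (hy : ∀ x ∈ Set.Icc (-b) b, HasDerivAt y (y' x) x)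
    (hy' : ∀ x ∈ Set.Icc (-b) b, HasDerivAt y' (q x * y x - w ^ 2 * y x) x)
    (hu : ∀ x ∈ Set.Icc (-b) b, HasDerivAt u (u' x) x)
    (hu' : ∀ x ∈ Set.Icc (-b) b, HasDerivAt u' (q x * u x - w ^ 2 * u x) x)
    (h0 : y 0 = u 0) (h0' : y' 0 = u' 0) (x : ℝ) (hx : x ∈ Set.Icc (-b) b) : y x = u x := by
  have key : ∀ (p : ℝ → ℂ) (d d' : ℝ → ℂ), (∀ x ∈ Set.Icc 0 b, ‖p x‖ ≤ Q) →
      (∀ x ∈ Set.Icc 0 b, HasDerivAt d (d' x) x) →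
      (∀ x ∈ Set.Icc 0 b, HasDerivAt d' (p x * d x - w ^ 2 * d x) x) →
      d 0 = 0 → d' 0 = 0 → ∀ x ∈ Set.Icc 0 b, d x = 0 := by
    intro p d d' hp hd hd' hd0 hd0' x hx
    have := eq_zero_of_abs_deriv_le_mul_abs_self_of_eq_zero_right (f := fun t => (d t, d' t))
      (f' := fun t => (d' t, p t * d t - w ^ 2 * d t)) (K := max 1 (Q + ‖w‖ ^ 2)) (a := 0) (b := b)
      (fun t ht => ((hd t ht).prodMk (hd' t ht)).continuousAt.continuousWithinAt)
      (fun t ht => ((hd t ⟨ht.1, ht.2.le⟩).prodMk (hd' t ⟨ht.1, ht.2.le⟩)).hasDerivWithinAt)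
      (by simp [hd0, hd0']) (fun t ht => by
        have ht' : t ∈ Set.Icc 0 b := ⟨ht.1, ht.2.le⟩
        have a1 : ‖d t‖ ≤ ‖(d t, d' t)‖ := norm_fst_le (d t, d' t)
        have a2 : ‖d' t‖ ≤ ‖(d t, d' t)‖ := norm_snd_le (d t, d' t)
        have hq := hp t ht'
        have nn : 0 ≤ ‖(d t, d' t)‖ := norm_nonneg _
        rw [Prod.norm_mk (d' t)]
        apply max_le
        · nlinarith [le_max_left 1 (Q + ‖w‖ ^ 2)]
        · calc ‖p t * d t - w ^ 2 * d t‖ ≤ ‖p t‖ * ‖d t‖ + ‖w‖ ^ 2 * ‖d t‖ := by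
                refine (norm_sub_le _ _).trans ?_
                simp
            _ = (‖p t‖ + ‖w‖ ^ 2) * ‖d t‖ := by ring
            _ ≤ max 1 (Q + ‖w‖ ^ 2) * ‖(d t, d' t)‖ := by
                gcongr
                refine le_trans ?_ (le_max_right _ _)
                linarith) x hx
    exact (Prod.mk.inj this).1
  have hneg : ∀ t : ℝ, HasDerivAt (fun t : ℝ => -t) (-1) t := fun t => hasDerivAt_neg t
  rw [← sub_eq_zero]
  rcases le_total 0 x with h | h
  · have hs : ∀ t ∈ Set.Icc 0 b, t ∈ Set.Icc (-b) b := fun t ht => ⟨by linarith [ht.1], ht.2⟩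
    exact key q (fun t => y t - u t) (fun t => y' t - u' t) (fun t ht => hQ t (hs t ht))
      (fun t ht => (hy t (hs t ht)).sub (hu t (hs t ht)))
      (fun t ht => ((hy' t (hs t ht)).sub (hu' t (hs t ht))).congr_deriv (by ring))
      (by simp [h0]) (by simp [h0']) x ⟨h, hx.2⟩
  · have hs : ∀ t ∈ Set.Icc 0 b, -t ∈ Set.Icc (-b) b := fun t ht =>
      ⟨by linarith [ht.2], by linarith [ht.1]⟩
    have := key (fun t => q (-t)) (fun t => y (-t) - u (-t)) (fun t => - y' (-t) - - u' (-t))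
      (fun t ht => hQ _ (hs t ht))
      (fun t ht => (((hy _ (hs t ht)).scomp t (hneg t)).sub
        ((hu _ (hs t ht)).scomp t (hneg t))).congr_deriv (by simp))
      (fun t ht => (((hy' _ (hs t ht)).scomp t (hneg t)).neg.sub
        ((hu' _ (hs t ht)).scomp t (hneg t)).neg).congr_deriv (by simp; ring))
      (by simp [h0]) (by simp [h0']) (-x) ⟨by linarith, by linarith [hx.1]⟩
    simpa using this


lemma finite_parseval (a : ℕ → ℂ) (M : ℕ) :
    ∫ θ in (-Real.pi)..Real.pi, ‖∑ n ∈ Finset.range M, a n * Complex.exp (n * Complex.I * θ)‖ ^ 2 =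
      2 * Real.pi * ∑ n ∈ Finset.range M, ‖a n‖ ^ 2 := by
  have hor : ∀ n m : ℕ, ∫ θ in (-Real.pi)..Real.pi, Complex.exp (((n : ℂ) - m) * Complex.I * θ) =
      if n = m then (2 * Real.pi : ℂ) else 0 := by
    intro n m
    split_ifs with h
    · subst h
      simp
      ring
    · have hc : ((n : ℂ) - m) * Complex.I ≠ 0 := by
        refine mul_ne_zero ?_ Complex.I_ne_zero
        rw [sub_ne_zero]
        exact_mod_cast h
      rw [integral_exp_mul_complex hc]
      have : Complex.exp (((n : ℂ) - m) * Complex.I * (Real.pi : ℝ)) =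
          Complex.exp (((n : ℂ) - m) * Complex.I * ((-Real.pi : ℝ) : ℂ)) := by
        rw [Complex.exp_eq_exp_iff_exists_int]
        refine ⟨(n : ℤ) - m, ?_⟩
        push_cast
        ring
      rw [this]; simp
  have hexp : ∀ θ : ℝ, ((‖∑ n ∈ Finset.range M, a n * Complex.exp (n * Complex.I * θ)‖ ^ 2 : ℝ) : ℂ) =
      ∑ n ∈ Finset.range M, ∑ m ∈ Finset.range M,
        a n * (starRingEnd ℂ) (a m) * Complex.exp (((n : ℂ) - m) * Complex.I * θ) := by
    intro θ
    push_cast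
    rw [← Complex.mul_conj', map_sum, Finset.sum_mul_sum]
    refine Finset.sum_congr rfl fun n _ => Finset.sum_congr rfl fun m _ => ?_
    rw [map_mul, ← Complex.exp_conj]
    have e : ((n : ℂ) - m) * Complex.I * θ = n * Complex.I * θ + (starRingEnd ℂ) (m * Complex.I * θ) := by
      simp; ring
    rw [e, Complex.exp_add]; ring
  have hC : ((∫ θ in (-Real.pi)..Real.pi, ‖∑ n ∈ Finset.range M, a n * Complex.exp (n * Complex.I * θ)‖ ^ 2 : ℝ) : ℂ)
      = ((2 * Real.pi * ∑ n ∈ Finset.range M, ‖a n‖ ^ 2 : ℝ) : ℂ) := by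
    rw [← intervalIntegral.integral_ofReal]
    simp_rw [hexp]
    rw [intervalIntegral.integral_finsetSum
      (fun n _ => Continuous.intervalIntegrable (by fun_prop) _ _)]
    push_cast
    rw [Finset.mul_sum]
    refine Finset.sum_congr rfl fun n hn => ?_
    rw [intervalIntegral.integral_finsetSum
      (fun n _ => Continuous.intervalIntegrable (by fun_prop) _ _)]
    simp_rw [intervalIntegral.integral_const_mul, hor]
    rw [Finset.sum_eq_single n]
    · rw [if_pos rfl, Complex.mul_conj']; ring
    · intro m _ hm
      rw [if_neg (Ne.symm hm), mul_zero]
    · intro h; exact absurd hn h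
  exact_mod_cast hC

lemma circle_bessel (g : ℕ → ℂ) (G : ℂ → ℂ) (hG : ∀ w, HasSum (fun n => g n * w ^ n) (G w))
    (r : ℝ) (hr : 0 ≤ r) (N : ℕ) :
    2 * Real.pi * ∑ n ∈ Finset.range N, ‖g n‖ ^ 2 * r ^ (2 * n) ≤
      ∫ θ in (-Real.pi)..Real.pi, ‖G (r * Complex.exp (Complex.I * θ))‖ ^ 2 := by
  have hsum : Summable (fun n => ‖g n‖ * r ^ n) := by
    have := (hG r).summable.norm
    refine this.congr fun n => ?_
    rw [norm_mul, norm_pow, Complex.norm_real, Real.norm_of_nonneg hr]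
  let P : ℕ → ℝ → ℂ := fun M θ => ∑ n ∈ Finset.range M, (g n * r ^ n) * Complex.exp (n * Complex.I * θ)
  have hP : ∀ M θ, P M θ = ∑ n ∈ Finset.range M, g n * (r * Complex.exp (Complex.I * θ)) ^ n := by
    intro M θ
    refine Finset.sum_congr rfl fun n _ => ?_
    rw [mul_pow, ← Complex.exp_nat_mul]
    ring_nf
  have hpars : ∀ M, ∫ θ in (-Real.pi)..Real.pi, ‖P M θ‖ ^ 2 =
      2 * Real.pi * ∑ n ∈ Finset.range M, ‖g n‖ ^ 2 * r ^ (2 * n) := by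
    intro M
    rw [finite_parseval (fun n => g n * r ^ n) M]
    congr 1
    refine Finset.sum_congr rfl fun n _ => ?_
    rw [norm_mul, norm_pow, Complex.norm_real, Real.norm_of_nonneg hr]
    ring
  have hlim : Tendsto (fun M => ∫ θ in (-Real.pi)..Real.pi, ‖P M θ‖ ^ 2) atTop
      (𝓝 (∫ θ in (-Real.pi)..Real.pi, ‖G (r * Complex.exp (Complex.I * θ))‖ ^ 2)) := by
    refine intervalIntegral.tendsto_integral_filter_of_dominated_convergence
      (fun _ => (∑' n, ‖g n‖ * r ^ n) ^ 2) ?_ ?_ ?_ ?_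
    · refine Eventually.of_forall fun M => ?_
      exact (Continuous.aestronglyMeasurable (by simp only [P]; fun_prop))
    · refine Eventually.of_forall fun M => Eventually.of_forall fun θ _ => ?_
      rw [Real.norm_of_nonneg (by positivity)]
      gcongr
      refine (norm_sum_le _ _).trans ?_
      refine le_trans (le_of_eq ?_) (hsum.sum_le_tsum (Finset.range M) (fun n _ => by positivity))
      refine Finset.sum_congr rfl fun n _ => ?_
      rw [norm_mul, norm_mul, norm_pow, Complex.norm_real, Real.norm_of_nonneg hr, Complex.norm_exp]
      simp
    · simp
    · refine Eventually.of_forall fun θ _ => ?_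
      have := (hG (r * Complex.exp (Complex.I * θ))).tendsto_sum_nat
      simp_rw [← hP] at this
      exact (this.norm).pow 2
  refine ge_of_tendsto hlim ?_
  filter_upwards [eventually_ge_atTop N] with M hM
  rw [hpars]
  gcongr

lemma gauss_moment (n : ℕ) :
    IntegrableOn (fun r : ℝ => r ^ (2 * n + 1) * Real.exp (-(r ^ 2) / 2)) (Set.Ioi 0) ∧
    ∫ r in Set.Ioi (0:ℝ), r ^ (2 * n + 1) * Real.exp (-(r ^ 2) / 2) = 2 ^ n * n.factorial := by
  have hq : (-1 : ℝ) < ((2 * n + 1 : ℕ) : ℝ) := by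
    have : (0:ℝ) ≤ ((2 * n + 1 : ℕ) : ℝ) := Nat.cast_nonneg _
    linarith
  have e : ∀ r : ℝ, r ^ (((2 * n + 1 : ℕ) : ℝ)) * Real.exp (-(1/2) * r ^ (2:ℝ)) =
      r ^ (2 * n + 1) * Real.exp (-(r ^ 2) / 2) := by
    intro r
    rw [Real.rpow_natCast, Real.rpow_two]
    ring_nf
  constructor
  · have := integrableOn_rpow_mul_exp_neg_mul_rpow (p := 2) (s := ((2 * n + 1 : ℕ) : ℝ)) (b := 1/2) hq (by norm_num) (by norm_num)
    simp_rw [e] at this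
    exact this
  · have := integral_rpow_mul_exp_neg_mul_rpow (p := 2) (q := ((2 * n + 1 : ℕ) : ℝ)) (b := 1/2) (by norm_num) hq (by norm_num)
    simp_rw [e] at this
    rw [this]
    have h1 : (((2 * n + 1 : ℕ) : ℝ) + 1) / 2 = (n : ℝ) + 1 := by push_cast; ring
    rw [neg_div, h1, Real.Gamma_nat_eq_factorial, Real.rpow_neg (by norm_num)]
    have h2 : ((n : ℝ) + 1) = ((n + 1 : ℕ) : ℝ) := by push_cast; ring
    rw [h2, Real.rpow_natCast, one_div_pow, pow_succ]
    field_simp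

lemma fock (g : ℕ → ℂ) (G : ℂ → ℂ) (hG : ∀ w, HasSum (fun n => g n * w ^ n) (G w))
    (H : ℂ → ℝ) (hHc : Continuous H) (hH : Integrable H)
    (hb : ∀ w, ‖G w‖ ^ 2 * Real.exp (-‖w‖ ^ 2 / 2) ≤ H w) (N : ℕ) :
    2 * Real.pi * ∑ n ∈ Finset.range N, ‖g n‖ ^ 2 * (2 ^ n * n.factorial) ≤ ∫ w, H w := by
  have hH0 : ∀ w, 0 ≤ H w := fun w => le_trans (by positivity) (hb w)
  let T : ℝ → ℝ := fun r => 2 * Real.pi * ∑ n ∈ Finset.range N,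
    ‖g n‖ ^ 2 * (r ^ (2 * n + 1) * Real.exp (-(r ^ 2) / 2))
  have hTi : IntegrableOn T (Set.Ioi 0) :=
    (integrable_finsetSum _ fun n _ => ((gauss_moment n).1.const_mul _)).const_mul _
  have hTint : ∫ r in Set.Ioi (0:ℝ), T r =
      2 * Real.pi * ∑ n ∈ Finset.range N, ‖g n‖ ^ 2 * (2 ^ n * n.factorial) := by
    simp only [T]
    rw [integral_const_mul, integral_finsetSum _ fun n _ => ((gauss_moment n).1.const_mul _)]
    congr 1
    refine Finset.sum_congr rfl fun n _ => ?_
    rw [integral_const_mul, (gauss_moment n).2]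
  have hT0 : ∀ r ∈ Set.Ioi (0:ℝ), 0 ≤ T r := by
    intro r hr
    have : 0 < r := hr
    simp only [T]; positivity
  have hpt : ∀ r ∈ Set.Ioi (0:ℝ), ENNReal.ofReal (T r) ≤
      ∫⁻ θ in Set.Ioo (-Real.pi) Real.pi, ENNReal.ofReal r *
        ENNReal.ofReal (H (Complex.polarCoord.symm (r, θ))) := by
    intro r hr
    have hr' : 0 < r := hr
    have hsymm : ∀ θ : ℝ, Complex.polarCoord.symm (r, θ) = r * Complex.exp (Complex.I * θ) := by
      intro θ
      rw [Complex.polarCoord_symm_apply, mul_comm Complex.I, Complex.exp_mul_I]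
      simp
    have hcont : Continuous fun θ : ℝ => r * H (r * Complex.exp (Complex.I * θ)) := by fun_prop
    have h1 : T r ≤ ∫ θ in Set.Ioo (-Real.pi) Real.pi, r * H (r * Complex.exp (Complex.I * θ)) := by
      have h2 := circle_bessel g G hG r hr'.le N
      have h3 : T r = r * Real.exp (-(r ^ 2) / 2) *
          (2 * Real.pi * ∑ n ∈ Finset.range N, ‖g n‖ ^ 2 * r ^ (2 * n)) := by
        simp only [T]
        rw [Finset.mul_sum, Finset.mul_sum, Finset.mul_sum]
        refine Finset.sum_congr rfl fun n _ => ?_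
        ring
      rw [h3]
      refine (mul_le_mul_of_nonneg_left h2 (by positivity)).trans ?_
      rw [intervalIntegral.integral_of_le (by linarith [Real.pi_pos]), integral_Ioc_eq_integral_Ioo,
        ← integral_const_mul]
      refine integral_mono_of_nonneg (Eventually.of_forall fun θ => by positivity) ?_
        (Eventually.of_forall fun θ => ?_)
      · exact (hcont.integrableOn_Icc).mono_set Set.Ioo_subset_Icc_self
      · have h4 := hb (r * Complex.exp (Complex.I * θ))
        have h5 : ‖(r : ℂ) * Complex.exp (Complex.I * θ)‖ = r := by
          rw [norm_mul, Complex.norm_real, Real.norm_of_nonneg hr'.le, Complex.norm_exp]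
          simp
        rw [h5] at h4
        simp only
        nlinarith
    refine (ENNReal.ofReal_le_ofReal h1).trans ?_
    rw [ofReal_integral_eq_lintegral_ofReal
      ((hcont.integrableOn_Icc).mono_set Set.Ioo_subset_Icc_self)
      (Eventually.of_forall fun θ => mul_nonneg hr'.le (hH0 _))]
    refine le_of_eq (lintegral_congr fun θ => ?_)
    rw [hsymm, ENNReal.ofReal_mul hr'.le]
  have hmeas : Measurable fun p : ℝ × ℝ => ENNReal.ofReal p.1 *
      ENNReal.ofReal (H (Complex.polarCoord.symm p)) := by
    simp only [Complex.polarCoord_symm_apply]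
    exact (ENNReal.measurable_ofReal.comp measurable_fst).mul
      (ENNReal.measurable_ofReal.comp (Continuous.measurable (by fun_prop)))
  have hpol := Complex.lintegral_comp_polarCoord_symm (fun w => ENNReal.ofReal (H w))
  rw [polarCoord_target] at hpol
  have hprod : ∫⁻ p in Set.Ioi (0:ℝ) ×ˢ Set.Ioo (-Real.pi) Real.pi, ENNReal.ofReal p.1 *
      ENNReal.ofReal (H (Complex.polarCoord.symm p)) = ∫⁻ r in Set.Ioi (0:ℝ),
      ∫⁻ θ in Set.Ioo (-Real.pi) Real.pi, ENNReal.ofReal r *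
        ENNReal.ofReal (H (Complex.polarCoord.symm (r, θ))) := by
    rw [Measure.volume_eq_prod, ← Measure.prod_restrict, lintegral_prod _ hmeas.aemeasurable]
  have hfin : ENNReal.ofReal (∫ r in Set.Ioi (0:ℝ), T r) ≤ ENNReal.ofReal (∫ w, H w) := by
    rw [ofReal_integral_eq_lintegral_ofReal hTi
      ((ae_restrict_iff' measurableSet_Ioi).2 (Eventually.of_forall hT0)),
      ofReal_integral_eq_lintegral_ofReal hH (Eventually.of_forall hH0)]
    rw [← hpol]
    refine le_trans (setLIntegral_mono' measurableSet_Ioi hpt) ?_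
    rw [← hprod]
    exact le_of_eq rfl
  rw [hTint] at hfin
  exact (ENNReal.ofReal_le_ofReal_iff (integral_nonneg hH0)).1 hfin

lemma H_integrable (C : ℝ) :
    Continuous (fun w : ℂ => C * (Real.exp (-(1/2) * w.im ^ 2) * (1 + w.re ^ 2)⁻¹)) ∧
    Integrable (fun w : ℂ => C * (Real.exp (-(1/2) * w.im ^ 2) * (1 + w.re ^ 2)⁻¹)) := by
  constructor
  · refine continuous_const.mul (Continuous.mul (by fun_prop) (Continuous.inv₀ (by fun_prop) ?_))
    intro w; positivity
  · refine Integrable.const_mul ?_ C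
    have h1 : Integrable (fun x : ℝ => (1 + x ^ 2)⁻¹) := integrable_inv_one_add_sq
    have h2 : Integrable (fun x : ℝ => Real.exp (-(1/2) * x ^ 2)) :=
      integrable_exp_neg_mul_sq (by norm_num)
    have h3 := (h1.mul_prod h2)
    rw [← Measure.volume_eq_prod] at h3
    have h4 := (Complex.volume_preserving_equiv_real_prod.integrable_comp_emb
      Complex.measurableEquivRealProd.measurableEmbedding).2 h3
    refine h4.congr (Eventually.of_forall fun w => ?_)
    simp [Complex.measurableEquivRealProd, mul_comm]


lemma tail_bound (c : ℕ → ℂ) (w G : ℂ)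
    (hs : HasSum (fun n => (Real.sqrt Real.pi : ℂ) * c n * (Complex.I * w) ^ n) G)
    (ha : Summable fun n => Real.sqrt Real.pi * (2 ^ n * n.factorial) * ‖c n‖ ^ 2) (N : ℕ) :
    ‖G - ∑ n ∈ Finset.range N, (Real.sqrt Real.pi : ℂ) * c n * (Complex.I * w) ^ n‖ ≤
      Real.sqrt (∑' n, Real.sqrt Real.pi * (2 ^ (n + N) * (n + N).factorial) * ‖c (n + N)‖ ^ 2) *
      (Real.pi ^ (1/4 : ℝ) * Real.exp (‖w‖ ^ 2 / 4)) := by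
  set α : ℝ := Real.pi ^ (1/4 : ℝ) with hα
  have hα0 : 0 < α := Real.rpow_pos_of_pos Real.pi_pos _
  have hα2 : α ^ 2 = Real.sqrt Real.pi := by
    rw [hα, ← Real.rpow_natCast, ← Real.rpow_mul Real.pi_pos.le, Real.sqrt_eq_rpow]
    norm_num
  have h1 := (hasSum_nat_add_iff' N).2 hs
  have h2 := h1.tendsto_sum_nat.norm
  refine le_of_tendsto h2 (Eventually.of_forall fun K => ?_)
  let D : ℕ → ℝ := fun n => 2 ^ n * n.factorial
  have hD : ∀ n, 0 < D n := fun n => by simp only [D]; positivity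
  let p : ℕ → ℝ := fun n => α * Real.sqrt (D (n + N)) * ‖c (n + N)‖
  let r : ℕ → ℝ := fun n => α * ‖w‖ ^ (n + N) / Real.sqrt (D (n + N))
  have hp2 : ∀ n, p n ^ 2 =
      Real.sqrt Real.pi * (2 ^ (n + N) * (n + N).factorial) * ‖c (n + N)‖ ^ 2 := by
    intro n
    simp only [p]
    rw [mul_pow, mul_pow, hα2, Real.sq_sqrt (hD _).le]
  have hr2 : ∀ n, r n ^ 2 = α ^ 2 * ((‖w‖ ^ 2 / 2) ^ (n + N) / (n + N).factorial) := by
    intro n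
    simp only [r]
    rw [div_pow, mul_pow, Real.sq_sqrt (hD _).le]
    simp only [D]
    rw [div_pow]
    field_simp
    ring
  have hterm : ∀ n, ‖(Real.sqrt Real.pi : ℂ) * c (n + N) * (Complex.I * w) ^ (n + N)‖ = p n * r n := by
    intro n
    have : Real.sqrt (D (n + N)) ≠ 0 := (Real.sqrt_pos.2 (hD _)).ne'
    rw [norm_mul, norm_mul, norm_pow, norm_mul, Complex.norm_I, one_mul, Complex.norm_real,
      Real.norm_of_nonneg (Real.sqrt_nonneg _), ← hα2]
    simp only [p, r]
    field_simp
  calc _ ≤ ∑ n ∈ Finset.range K, p n * r n := by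
        refine (norm_sum_le _ _).trans (le_of_eq (Finset.sum_congr rfl fun n _ => hterm n))
    _ ≤ Real.sqrt (∑ n ∈ Finset.range K, p n ^ 2) * Real.sqrt (∑ n ∈ Finset.range K, r n ^ 2) :=
        Real.sum_mul_le_sqrt_mul_sqrt _ _ _
    _ ≤ _ := by
        refine mul_le_mul (Real.sqrt_le_sqrt ?_) ?_ (Real.sqrt_nonneg _) (Real.sqrt_nonneg _)
        · simp only [hp2]
          exact ((summable_nat_add_iff N).2 ha).sum_le_tsum _ (fun n _ => by positivity)
        · refine Real.sqrt_le_iff.2 ⟨by positivity, ?_⟩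
          simp only [hr2]
          rw [← Finset.mul_sum, mul_pow, ← Real.exp_nat_mul]
          refine mul_le_mul_of_nonneg_left ?_ (by positivity)
          have he : ((2:ℕ):ℝ) * (‖w‖ ^ 2 / 4) = ‖w‖ ^ 2 / 2 := by push_cast; ring
          rw [he]
          have h3 := Real.sum_le_exp_of_nonneg (x := ‖w‖ ^ 2 / 2) (by positivity) (N + K)
          rw [Finset.sum_range_add] at h3
          refine le_trans ?_ h3
          have h4 : 0 ≤ ∑ i ∈ Finset.range N, (‖w‖ ^ 2 / 2) ^ i / (i.factorial : ℝ) :=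
            Finset.sum_nonneg fun i _ => by positivity
          simp only [add_comm _ N]
          linarith

lemma norm_sq_eq (w : ℂ) : ‖w‖ ^ 2 = w.re ^ 2 + w.im ^ 2 := by
  rw [← Complex.normSq_eq_norm_sq, Complex.normSq_apply]; ring

lemma norm_exp_quarter (w : ℂ) :
    ‖Complex.exp (-w ^ 2 / 4)‖ = Real.exp ((w.im ^ 2 - w.re ^ 2) / 4) := by
  rw [Complex.norm_exp]
  congr 1
  have : -w ^ 2 / 4 = ((-1/4 : ℝ) : ℂ) * (w * w) := by push_cast; ring
  rw [this, Complex.re_ofReal_mul, Complex.mul_re]; ring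

/-- pointwise bound giving an integrable majorant -/
lemma majorant (F : ℂ → ℂ) (x K C2 : ℝ)
    (hF1 : ∀ w : ℂ, 1 ≤ ‖w‖ → ‖F w‖ ≤ Real.exp (|w.im| * |x|) * K / ‖w‖)
    (hF2 : ∀ w : ℂ, ‖w‖ ≤ 1 → ‖F w‖ ≤ C2) (w : ℂ) :
    ‖F w * Complex.exp (-(Complex.I * w) ^ 2 / 4)‖ ^ 2 * Real.exp (-‖w‖ ^ 2 / 2) ≤
      ((2 * K ^ 2 + 2 * C2 ^ 2) * Real.exp (2 * x ^ 2)) *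
        (Real.exp (-(1/2) * w.im ^ 2) * (1 + w.re ^ 2)⁻¹) := by
  have hw := norm_sq_eq w
  have e1 : ‖F w * Complex.exp (-(Complex.I * w) ^ 2 / 4)‖ ^ 2 * Real.exp (-‖w‖ ^ 2 / 2) =
      ‖F w‖ ^ 2 * Real.exp (-w.im ^ 2) := by
    rw [norm_mul, norm_exp_quarter, mul_pow, ← Real.exp_nat_mul, mul_assoc, ← Real.exp_add, hw]
    congr 2
    simp
    ring
  rw [e1]
  have e2 : ‖F w‖ ^ 2 ≤ (2 * K ^ 2 + 2 * C2 ^ 2) * Real.exp (2 * (|w.im| * |x|)) *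
      (1 + w.re ^ 2)⁻¹ := by
    rw [← div_eq_mul_inv, le_div_iff₀ (by positivity)]
    have hE : 1 ≤ Real.exp (2 * (|w.im| * |x|)) := Real.one_le_exp (by positivity)
    rcases le_total 1 ‖w‖ with h | h
    · have h1 := hF1 w h
      have h0 : 0 < ‖w‖ := by linarith
      have h2 : ‖F w‖ * ‖w‖ ≤ Real.exp (|w.im| * |x|) * K := by
        rwa [le_div_iff₀ h0] at h1
      have h3 := pow_le_pow_left₀ (by positivity) h2 2
      rw [mul_pow, mul_pow, ← Real.exp_nat_mul] at h3
      push_cast at h3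
      have h4 : 1 + w.re ^ 2 ≤ 2 * ‖w‖ ^ 2 := by nlinarith [sq_nonneg w.im]
      have h5 : ‖F w‖ ^ 2 * (1 + w.re ^ 2) ≤ ‖F w‖ ^ 2 * (2 * ‖w‖ ^ 2) :=
        mul_le_mul_of_nonneg_left h4 (by positivity)
      have h6 : 0 ≤ 2 * C2 ^ 2 * Real.exp (2 * (|w.im| * |x|)) := by positivity
      nlinarith
    · have h1 := hF2 w h
      have h3 := pow_le_pow_left₀ (norm_nonneg _) h1 2
      have h4 : 1 + w.re ^ 2 ≤ 2 := by nlinarith [sq_nonneg w.im, norm_nonneg w]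
      have h5 : ‖F w‖ ^ 2 * (1 + w.re ^ 2) ≤ C2 ^ 2 * 2 :=
        mul_le_mul h3 h4 (by positivity) (by positivity)
      have h6 : (2 * K ^ 2 + 2 * C2 ^ 2) * 1 ≤
          (2 * K ^ 2 + 2 * C2 ^ 2) * Real.exp (2 * (|w.im| * |x|)) :=
        mul_le_mul_of_nonneg_left hE (by positivity)
      nlinarith [sq_nonneg K]
  have e3 : Real.exp (2 * (|w.im| * |x|)) * Real.exp (-w.im ^ 2) ≤
      Real.exp (2 * x ^ 2) * Real.exp (-(1/2) * w.im ^ 2) := by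
    rw [← Real.exp_add, ← Real.exp_add]
    refine Real.exp_le_exp.2 ?_
    have := sq_nonneg (|w.im| - 2 * |x|)
    nlinarith [sq_abs w.im, sq_abs x]
  calc _ ≤ (2 * K ^ 2 + 2 * C2 ^ 2) * Real.exp (2 * (|w.im| * |x|)) *
      (1 + w.re ^ 2)⁻¹ * Real.exp (-w.im ^ 2) := mul_le_mul_of_nonneg_right e2 (by positivity)
    _ = ((2 * K ^ 2 + 2 * C2 ^ 2) * (1 + w.re ^ 2)⁻¹) *
      (Real.exp (2 * (|w.im| * |x|)) * Real.exp (-w.im ^ 2)) := by ring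
    _ ≤ ((2 * K ^ 2 + 2 * C2 ^ 2) * (1 + w.re ^ 2)⁻¹) *
      (Real.exp (2 * x ^ 2) * Real.exp (-(1/2) * w.im ^ 2)) :=
        mul_le_mul_of_nonneg_left e3 (by positivity)
    _ = _ := by ring


/-- error bound for the truncated Hermite representation, uniform in every strip. -/
theorem hermite_truncation_error
    (b : ℝ) (hb : 0 < b) (q : ℝ → ℂ) (hq : ContinuousOn q (Set.Icc (-b) b))
    (f f' : ℝ → ℂ)
    (hf : ∀ x ∈ Set.Icc (-b) b, HasDerivAt f (f' x) x)
    (hf' : ∀ x ∈ Set.Icc (-b) b, HasDerivAt f' (q x * f x) x)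
    (hf0 : f 0 = 1) (hf'0 : f' 0 = 0)
    (hfne : ∀ x ∈ Set.Icc (-b) b, f x ≠ 0) :
    ∃ ε : ℕ → ℝ → ℝ,
      (∀ N : ℕ, ∀ x ∈ Set.Icc (-b) b, 0 ≤ ε N x) ∧
      (∀ x ∈ Set.Icc (-b) b, Tendsto (fun N : ℕ => ε N x) atTop (𝓝 0)) ∧
      ∀ (w : ℂ) (y y' : ℝ → ℂ),
        (∀ x ∈ Set.Icc (-b) b, HasDerivAt y (y' x) x) →
        (∀ x ∈ Set.Icc (-b) b, HasDerivAt y' (q x * y x - w ^ 2 * y x) x) →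
        y 0 = 1 → y' 0 = Complex.I * w →
        ∀ (N : ℕ), ∀ x ∈ Set.Icc (-b) b,
          ‖y x - (fun (w : ℂ) (N : ℕ) (x : ℝ) => Complex.exp (Complex.I * w * x) +
        (Real.sqrt Real.pi : ℂ) * Complex.exp (-w ^ 2 / 4) *
          ∑ n ∈ Finset.range N, cCoef f n x * (Complex.I * w) ^ n) w N x‖ ≤
            Real.pi ^ (1/4 : ℝ) * Real.exp (w.im ^ 2 / 2) * ε N x := by
  obtain ⟨Q, hQ⟩ : ∃ Q : ℝ, ∀ x ∈ Set.Icc (-b) b, ‖q x‖ ≤ Q :=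
    isCompact_Icc.exists_bound_of_continuousOn hq
  obtain ⟨M, hM, hsol⟩ := spps b hb q f f' hf hf' hf0 hf'0 hfne
  choose U U' hU hU' hU0 hU'0 hUx using hsol
  have hcs : ∀ (w : ℂ), ∀ x ∈ Set.Icc (-b) b,
      HasSum (fun n => (Real.sqrt Real.pi : ℂ) * cCoef f n x * (Complex.I * w) ^ n)
        ((U w x - Complex.exp (Complex.I * w * x)) * Complex.exp (-(Complex.I * w) ^ 2 / 4)) :=
    fun w x hx => cauchy_part f x _ _ (hUx w x hx).1 (hUx w x hx).2.1
  have hsum : ∀ x ∈ Set.Icc (-b) b,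
      Summable fun n => Real.sqrt Real.pi * (2 ^ n * n.factorial) * ‖cCoef f n x‖ ^ 2 := by
    intro x hx
    have hmaj := majorant (fun w => U w x - Complex.exp (Complex.I * w * x)) x
      (Q * gronwallBound 0 Q 1 |x|) (‖f x‖ * Real.exp (M * |x|) + Real.exp |x|)
      (fun w hw => est_abs b hb q Q hQ w hw _ _ (hU w) (hU' w) (hU0 w) (hU'0 w) x hx)
      (fun w hw => by
        refine (norm_sub_le _ _).trans (add_le_add ((hUx w x hx).2.2.trans ?_) ?_)
        · refine mul_le_mul_of_nonneg_left (Real.exp_le_exp.2 ?_) (norm_nonneg _)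
          exact mul_le_of_le_one_right (by positivity) hw
        · refine (Complex.norm_exp_le_exp_norm _).trans (Real.exp_le_exp.2 ?_)
          rw [norm_mul, norm_mul, Complex.norm_I, one_mul, Complex.norm_real, Real.norm_eq_abs]
          exact mul_le_of_le_one_left (abs_nonneg _) hw)
    obtain ⟨hHc, hHi⟩ := H_integrable ((2 * (Q * gronwallBound 0 Q 1 |x|) ^ 2 +
      2 * (‖f x‖ * Real.exp (M * |x|) + Real.exp |x|) ^ 2) * Real.exp (2 * x ^ 2))
    have hfock := fock (fun n => (Real.sqrt Real.pi : ℂ) * cCoef f n x * Complex.I ^ n)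
      (fun w => (U w x - Complex.exp (Complex.I * w * x)) *
        Complex.exp (-(Complex.I * w) ^ 2 / 4))
      (fun w => by
        have := hcs w x hx
        simpa only [mul_pow, mul_assoc] using this) _ hHc hHi hmaj
    have hs2 := summable_of_sum_range_le
      (f := fun n => ‖(Real.sqrt Real.pi : ℂ) * cCoef f n x * Complex.I ^ n‖ ^ 2 *
        (2 ^ n * n.factorial)) (fun n => by positivity)
      (fun N => (le_div_iff₀' (by positivity : (0:ℝ) < 2 * Real.pi)).2 (hfock N))
    have hpi : Real.sqrt Real.pi ≠ 0 := (Real.sqrt_pos.2 Real.pi_pos).ne'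
    refine (hs2.mul_left (Real.sqrt Real.pi)⁻¹).congr fun n => ?_
    rw [norm_mul, norm_mul, norm_pow, Complex.norm_I, one_pow, mul_one, Complex.norm_real,
      Real.norm_of_nonneg (Real.sqrt_nonneg _)]
    field_simp
  refine ⟨fun N x => Real.sqrt (∑' n, Real.sqrt Real.pi * (2 ^ (n + N) * (n + N).factorial) *
    ‖cCoef f (n + N) x‖ ^ 2), fun N x _ => Real.sqrt_nonneg _, fun x hx => ?_, ?_⟩
  · have h1 := tendsto_sum_nat_add
      (fun n => Real.sqrt Real.pi * (2 ^ n * n.factorial) * ‖cCoef f n x‖ ^ 2)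
    have h2 := (Real.continuous_sqrt.tendsto 0).comp h1
    rw [Real.sqrt_zero] at h2
    exact h2
  · intro w y y' hy hy' hy0 hy'0 N x hx
    have hyU : y x = U w x := ode_unique b hb q Q hQ w y y' (U w) (U' w) hy hy' (hU w) (hU' w)
      (by rw [hy0, hU0]) (by rw [hy'0, hU'0]) x hx
    have ht := tail_bound (fun n => cCoef f n x) w _ (hcs w x hx) (hsum x hx) N
    have hexp : Complex.exp (-w ^ 2 / 4) * Complex.exp (-(Complex.I * w) ^ 2 / 4) = 1 := by
      have hz : -w ^ 2 / 4 + -(-1 * w ^ 2) / 4 = 0 := by ring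
      rw [← Complex.exp_add, mul_pow, Complex.I_sq, hz, Complex.exp_zero]
    have hid : y x - (fun (w : ℂ) (N : ℕ) (x : ℝ) => Complex.exp (Complex.I * w * x) +
        (Real.sqrt Real.pi : ℂ) * Complex.exp (-w ^ 2 / 4) *
          ∑ n ∈ Finset.range N, cCoef f n x * (Complex.I * w) ^ n) w N x =
        Complex.exp (-w ^ 2 / 4) * ((U w x - Complex.exp (Complex.I * w * x)) *
          Complex.exp (-(Complex.I * w) ^ 2 / 4) -
          ∑ n ∈ Finset.range N, (Real.sqrt Real.pi : ℂ) * cCoef f n x * (Complex.I * w) ^ n) := by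
      simp only [mul_assoc, ← Finset.mul_sum]
      rw [hyU]
      linear_combination (-(U w x - Complex.exp (Complex.I * (w * x)))) * hexp
    rw [hid, norm_mul, norm_exp_quarter]
    refine (mul_le_mul_of_nonneg_left ht (Real.exp_pos _).le).trans (le_of_eq ?_)
    have hee : Real.exp (w.im ^ 2 / 2) =
        Real.exp ((w.im ^ 2 - w.re ^ 2) / 4) * Real.exp (‖w‖ ^ 2 / 4) := by
      rw [← Real.exp_add, norm_sq_eq]
      congr 1
      ring
    rw [hee]
    ring

end
end
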